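/- (Universal Models Theorem) Let Σ be a finite set consisting of FDs Σ_FD and UIDs Σ_UID that is closed under finite implication, let k ∈ ℕ, and let I₀ be a finite instance satisfying Σ_FD. Then there exists a finite superinstance I of I₀ that satisfies Σ and is k-sound for Σ, I₀, and the class of all Boolean CQs (and hence is a finite k-universal model). -/

import Mathlib

namespace FQA

/-- A relational signature: a finite set of relation names, each with an arity `≥ 1`. -/
structure Sig where
  Rel : Type
  rel_fin : Finite Rel
  ar : Rel → ℕ
  ar_pos : ∀ R, 1 ≤ ar R

/-- The positions of a signature: pairs of a relation and an index into its arity. -/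
abbrev Sig.Pos (σ : Sig) : Type := Σ R : σ.Rel, Fin (σ.ar R)

/-- A fact `R(a₁, …, a_{ar R})` with elements from `α`. -/
abbrev Fact (σ : Sig) (α : Type) : Type := Σ R : σ.Rel, Fin (σ.ar R) → α

/-- An instance is a set of facts. -/
abbrev Inst (σ : Sig) (α : Type) : Type := Set (Fact σ α)

variable {σ : Sig} {α β : Type}

/-- Element `a` occurs at position `p` in some fact of the instance `I`. -/
def occursAt (I : Inst σ α) (p : σ.Pos) (a : α) : Prop :=
  ∃ t : Fin (σ.ar p.1) → α, (⟨p.1, t⟩ : Fact σ α) ∈ I ∧ t p.2 = a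

/-- The active domain of an instance: the elements occurring in some fact. -/
def activeDom (I : Inst σ α) : Set α :=
  {a | ∃ F : Fact σ α, F ∈ I ∧ ∃ i, F.2 i = a}

/-- A unary inclusion dependency `src ⊆ dst` (nontrivial: `src ≠ dst`). -/
structure UID (σ : Sig) where
  src : σ.Pos
  dst : σ.Pos
  ne : src ≠ dst

/-- The reverse of a UID. -/
def UID.rev (τ : UID σ) : UID σ := ⟨τ.dst, τ.src, τ.ne.symm⟩

/-- An instance satisfies a UID if every element occurring at `src` also occurs at `dst`. -/
def satUID (I : Inst σ α) (τ : UID σ) : Prop :=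
  ∀ a, occursAt I τ.src a → occursAt I τ.dst a

/-- A functional dependency `R^L → R^r`, with `L` nonempty and `r ∉ L`. -/
structure FD (σ : Sig) where
  rel : σ.Rel
  lhs : Set (Fin (σ.ar rel))
  rhs : Fin (σ.ar rel)
  lhs_nonempty : lhs.Nonempty
  rhs_not_mem : rhs ∉ lhs

/-- An instance satisfies an FD if any two facts of `rel` agreeing on `lhs` agree on `rhs`. -/
def satFD (I : Inst σ α) (φ : FD σ) : Prop :=
  ∀ t u : Fin (σ.ar φ.rel) → α,
    (⟨φ.rel, t⟩ : Fact σ α) ∈ I → (⟨φ.rel, u⟩ : Fact σ α) ∈ I →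
    (∀ i ∈ φ.lhs, t i = u i) → t φ.rhs = u φ.rhs

/-- A Boolean conjunctive query: existentially quantified variables `Fin nv` and a
conjunction (list) of constant-free atoms, in which every variable occurs. -/
structure CQ (σ : Sig) where
  nv : ℕ
  atoms : List (Fact σ (Fin nv))
  vars_occur : ∀ x : Fin nv, ∃ A ∈ atoms, ∃ i, A.2 i = x

/-- The size of a CQ: its number of atoms. -/
def CQ.size (q : CQ σ) : ℕ := q.atoms.length

/-- A Boolean CQ holds in an instance iff there is a homomorphism (a match) from its
atoms to facts of the instance. -/
def satCQ (I : Inst σ α) (q : CQ σ) : Prop :=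
  ∃ h : Fin q.nv → α, ∀ A ∈ q.atoms, (⟨A.1, fun i => h (A.2 i)⟩ : Fact σ α) ∈ I

/-- An instance satisfies a set of UIDs and a set of FDs. -/
def satAllC (I : Inst σ ℕ) (Su : Set (UID σ)) (Sf : Set (FD σ)) : Prop :=
  (∀ τ ∈ Su, satUID I τ) ∧ (∀ φ ∈ Sf, satFD I φ)

/-- Unrestricted open-world entailment: every (finite or infinite) superinstance of `I₀`
satisfying the constraints satisfies `q`. -/
def unrEntails (I₀ : Inst σ ℕ) (Su : Set (UID σ)) (Sf : Set (FD σ)) (q : CQ σ) : Prop :=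
  ∀ I : Inst σ ℕ, I₀ ⊆ I → satAllC I Su Sf → satCQ I q

/-- Finite open-world entailment: every finite superinstance of `I₀` satisfying the
constraints satisfies `q`. -/
def finEntails (I₀ : Inst σ ℕ) (Su : Set (UID σ)) (Sf : Set (FD σ)) (q : CQ σ) : Prop :=
  ∀ I : Inst σ ℕ, I₀ ⊆ I → I.Finite → satAllC I Su Sf → satCQ I q

/-- A (nontrivial) UID is finitely implied by the constraints: it holds in every finite
instance satisfying them. -/
def finImpUID (Su : Set (UID σ)) (Sf : Set (FD σ)) (τ : UID σ) : Prop :=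
  ∀ I : Inst σ ℕ, I.Finite → satAllC I Su Sf → satUID I τ

/-- A (nontrivial) FD is finitely implied by the constraints: it holds in every finite
instance satisfying them. -/
def finImpFD (Su : Set (UID σ)) (Sf : Set (FD σ)) (φ : FD σ) : Prop :=
  ∀ I : Inst σ ℕ, I.Finite → satAllC I Su Sf → satFD I φ

/-!
In finite models an inclusion `p ⊆ q` forces the projection to `p` to be no larger than the one to
`q`, and a unary functional dependency `i → j` forces the opposite comparison. This ranks the
positions: ranks rise along inclusions, fall along functional dependencies, and by finiteness a
dependency between positions of equal rank can be reversed.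

A finite base model satisfying the inclusions, and the dependencies within blocks of mutually
determining positions, is glued from pieces. Coordinates in a piece are reduced words of bounded
length, moved by permutations that prepend or remove a letter, and pieces are addressed by truncated
histories. Hence the base model looks locally like a tree, and `n` steps of it can be simulated in
every model of the inclusions.

The remaining functional dependencies `L → r` are enforced by tagging the elements. The tag of the
element for which a fact is created is encoded in a full pattern, which is possible because full
patterns are more numerous than patterns with a gap. A position `l` of the fact that does not
determine this element carries the pattern erased at all such positions determining `l`. What is
erased at all of `L` is then also erased at `r`, so the tags at `L` reveal the tag at `r`.

Finally, taking a cover by a finite group without short relations makes any `k` facts acyclic, so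
that a match of a query with at most `k` atoms can be transferred fact by fact to any model.
-/

/-! ### Instances -/

instance : Finite σ.Rel := σ.rel_fin

/-- `f` is a homomorphism from the instance `I` to the instance `J`. -/
def IsHom (I : Inst σ α) (J : Inst σ β) (f : α → β) : Prop :=
  ∀ ⦃R : σ.Rel⦄ ⦃t : Fin (σ.ar R) → α⦄, (⟨R, t⟩ : Fact σ α) ∈ I →
    (⟨R, fun i => f (t i)⟩ : Fact σ β) ∈ J

/-- The inclusion `p ⊆ q` between the projections of `I`; unlike `satUID`, this allows `p = q`. -/
def Includes (I : Inst σ α) (p q : σ.Pos) : Prop :=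
  ∀ a, occursAt I p a → occursAt I q a

/-- The functional dependency `L → r` holds in `I`; unlike `satFD`, this allows `L = ∅` and
`r ∈ L`. -/
def Determines (I : Inst σ α) {R : σ.Rel} (L : Set (Fin (σ.ar R))) (r : Fin (σ.ar R)) : Prop :=
  ∀ t u : Fin (σ.ar R) → α, (⟨R, t⟩ : Fact σ α) ∈ I → (⟨R, u⟩ : Fact σ α) ∈ I →
    (∀ i ∈ L, t i = u i) → t r = u r

section Instances

variable {I : Inst σ α} {J : Inst σ β} {R : σ.Rel}

theorem occursAt_of_mem {t : Fin (σ.ar R) → α} (ht : (⟨R, t⟩ : Fact σ α) ∈ I)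
    (i : Fin (σ.ar R)) : occursAt I ⟨R, i⟩ (t i) :=
  ⟨t, ht, rfl⟩

theorem IsHom.occursAt {f : α → β} (hf : IsHom I J f) {p : σ.Pos} {a : α}
    (ha : occursAt I p a) : occursAt J p (f a) := by
  obtain ⟨t, ht, rfl⟩ := ha
  exact ⟨_, hf ht, rfl⟩

theorem Determines.of_occursAt {i j : Fin (σ.ar R)} (h : Determines I {i} j)
    {t u : Fin (σ.ar R) → α} (ht : (⟨R, t⟩ : Fact σ α) ∈ I) (hu : (⟨R, u⟩ : Fact σ α) ∈ I)
    (heq : t i = u i) : t j = u j :=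
  h t u ht hu fun l hl => by rwa [Set.mem_singleton_iff.1 hl]

theorem mem_activeDom {t : Fin (σ.ar R) → α} (ht : (⟨R, t⟩ : Fact σ α) ∈ I)
    (i : Fin (σ.ar R)) : t i ∈ activeDom I :=
  ⟨⟨R, t⟩, ht, i, rfl⟩

theorem activeDom_finite (hI : I.Finite) : (activeDom I).Finite := by
  refine (hI.biUnion (t := fun F => Set.range F.2) fun F _ => Set.finite_range F.2).subset ?_
  rintro a ⟨F, hF, i, rfl⟩
  exact Set.mem_biUnion hF ⟨i, rfl⟩

theorem finite_setOf_occursAt (hI : I.Finite) (p : σ.Pos) : {a | occursAt I p a}.Finite := by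
  refine (activeDom_finite hI).subset ?_
  rintro a ⟨t, ht, rfl⟩
  exact mem_activeDom ht p.2

end Instances

/-! ### Toggle permutations of reduced words -/

/-- Words over `S` of length at most `N` without two equal consecutive letters: the ball of
radius `N` around the empty word in the free product of copies of `ℤ/2` indexed by `S`. -/
abbrev ReducedWord (S : Type) (N : ℕ) : Type := {w : List S // w.IsChain (· ≠ ·) ∧ w.length ≤ N}

open Classical in
/-- Left multiplication of a word by the involutive letter `s`, not performed when the result
would exceed length `N`. -/
noncomputable def toggleList {S : Type} (N : ℕ) (s : S) (w : List S) : List S :=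
  if w.head? = some s then w.tail else if w.length < N then s :: w else w

section ReducedWord

variable {S : Type} {N : ℕ}

theorem toggleList_cases (N : ℕ) (s : S) (w : List S) :
    w = s :: toggleList N s w ∨
      (toggleList N s w = s :: w ∧ w.head? ≠ some s ∧ w.length < N) ∨
      (toggleList N s w = w ∧ N ≤ w.length) := by
  unfold toggleList
  split_ifs with hhead hlen
  · exact Or.inl (List.cons_head?_tail (Option.mem_def.2 hhead)).symm
  · exact Or.inr (Or.inl ⟨rfl, hhead, hlen⟩)
  · exact Or.inr (Or.inr ⟨rfl, not_lt.1 hlen⟩)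

theorem isChain_cons_ne_iff {s : S} {w : List S} :
    (s :: w).IsChain (· ≠ ·) ↔ w.head? ≠ some s ∧ w.IsChain (· ≠ ·) := by
  cases w with
  | nil => simp
  | cons a l => simp [eq_comm]

theorem toggleList_reduced (s : S) {w : List S} (hw : w.IsChain (· ≠ ·) ∧ w.length ≤ N) :
    (toggleList N s w).IsChain (· ≠ ·) ∧ (toggleList N s w).length ≤ N := by
  rcases toggleList_cases N s w with hcons | ⟨hcons, hhead, hlen⟩ | ⟨hself, -⟩
  · rw [hcons] at hw
    exact ⟨hw.1.tail, (Nat.le_succ _).trans hw.2⟩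
  · rw [hcons]
    exact ⟨isChain_cons_ne_iff.2 ⟨hhead, hw.1⟩, hlen⟩
  · rwa [hself]

theorem toggleList_toggleList (s : S) {w : List S} (hw : w.IsChain (· ≠ ·) ∧ w.length ≤ N) :
    toggleList N s (toggleList N s w) = w := by
  rcases toggleList_cases N s w with hcons | ⟨hcons, -⟩ | ⟨hself, -⟩
  · generalize toggleList N s w = v at hcons
    subst hcons
    have hlen : v.length < N := hw.2
    simp [toggleList, (isChain_cons_ne_iff.1 hw.1).1, hlen]
  · rw [hcons]
    simp [toggleList]
  · rw [hself, hself]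

namespace ReducedWord

instance [Finite S] : Finite (ReducedWord S N) :=
  Set.Finite.to_subtype ((List.finite_length_le S N).subset fun _ h => h.2)

/-- The empty word. -/
def nil : ReducedWord S N := ⟨[], by simp, by simp⟩

@[simp]
theorem val_nil : (nil : ReducedWord S N).1 = [] := rfl

/-- The involution of the reduced words given by the letter `s`. -/
noncomputable def toggle (s : S) : Equiv.Perm (ReducedWord S N) :=
  Function.Involutive.toPerm (fun w => ⟨toggleList N s w.1, toggleList_reduced s w.2⟩)
    fun w => Subtype.ext (toggleList_toggleList s w.2)

theorem toggle_cases (s : S) (w : ReducedWord S N) :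
    w.1 = s :: (toggle s w).1 ∨ (toggle s w).1 = s :: w.1 ∨
      (toggle s w = w ∧ N ≤ w.1.length) := by
  rcases toggleList_cases N s w.1 with hcons | ⟨hcons, -⟩ | ⟨hself, hlen⟩
  · exact Or.inl hcons
  · exact Or.inr (Or.inl hcons)
  · exact Or.inr (Or.inr ⟨Subtype.ext hself, hlen⟩)

theorem toggle_mul_self (s : S) : (toggle s : Equiv.Perm (ReducedWord S N)) * toggle s = 1 :=
  Equiv.ext fun w => Subtype.ext (toggleList_toggleList s w.2)

theorem prod_map_toggle_nil {w : List S} (hw : w.IsChain (· ≠ ·)) (hlen : w.length ≤ N) :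
    ((w.map (toggle : S → Equiv.Perm (ReducedWord S N))).prod nil).1 = w := by
  induction w with
  | nil => simp
  | cons s v ih =>
    have hv := ih hw.tail ((Nat.le_succ _).trans hlen)
    rw [List.map_cons, List.prod_cons, Equiv.Perm.mul_apply]
    rcases toggle_cases s ((v.map toggle).prod (nil : ReducedWord S N)) with h | h | ⟨-, h⟩
    · rw [hv] at h
      exact absurd (by rw [h]; rfl) (isChain_cons_ne_iff.1 hw).1
    · rw [h, hv]
    · rw [hv] at h
      exact absurd hlen (not_le.2 (Nat.lt_succ_of_le h))

theorem prod_map_toggle_ne_one {w : List S} (hw : w.IsChain (· ≠ ·)) (hlen : w.length ≤ N)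
    (hne : w ≠ []) : (w.map (toggle : S → Equiv.Perm (ReducedWord S N))).prod ≠ 1 := fun h => by
  have := prod_map_toggle_nil hw hlen
  rw [h] at this
  exact hne this.symm

theorem toggle_injective (hN : 2 ≤ N) :
    Function.Injective (toggle : S → Equiv.Perm (ReducedWord S N)) := fun s t h => by
  by_contra hne
  refine prod_map_toggle_ne_one (N := N) (w := [s, t]) (by simpa using hne) (by simpa using hN)
    (by simp) ?_
  simp [h, toggle_mul_self]

open Classical in
/-- The involution `toggle s` with its orbit `{[], [s]}` split into two fixed points. -/
noncomputable def cut (s : S) : Equiv.Perm (ReducedWord S N) :=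
  toggle s * Equiv.swap nil (toggle s nil)

open Classical in
theorem cut_nil (s : S) : cut s (nil : ReducedWord S N) = nil := by
  rw [cut, Equiv.Perm.mul_apply, Equiv.swap_apply_left, ← Equiv.Perm.mul_apply, toggle_mul_self,
    Equiv.Perm.one_apply]

open Classical in
theorem cut_cases (s : S) (w : ReducedWord S N) :
    (cut s w = w ∧ (w.1 = [] ∨ w.1 = [s])) ∨ cut s w = toggle s w := by
  by_cases hnil : w = nil
  · exact Or.inl ⟨hnil ▸ cut_nil s, Or.inl (congrArg Subtype.val hnil)⟩
  by_cases hs : w = toggle s nil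
  · have hcut : cut s w = w := by
      rw [cut, Equiv.Perm.mul_apply, hs, Equiv.swap_apply_right]
    refine Or.inl ⟨hcut, Or.inr ?_⟩
    rcases toggle_cases s (nil : ReducedWord S N) with h | h | ⟨h, -⟩
    · simp at h
    · rw [hs, h, val_nil]
    · exact absurd (hs.trans h) hnil
  · right
    rw [cut, Equiv.Perm.mul_apply, Equiv.swap_apply_of_ne_of_ne hnil hs]

end ReducedWord

end ReducedWord

/-! ### Ranked dependencies -/

/-- A preorder of inclusions between positions and preorders of unary functional dependencies
within the relations, together with a rank which increases along inclusions and decreases along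
functional dependencies, and such that dependencies between positions of equal rank are
reversible. -/
structure RankedDeps (σ : Sig) where
  incl : σ.Pos → σ.Pos → Prop
  incl_refl : ∀ p, incl p p
  incl_trans : ∀ {p q r}, incl p q → incl q r → incl p r
  det : ∀ {R : σ.Rel}, Fin (σ.ar R) → Fin (σ.ar R) → Prop
  det_refl : ∀ {R : σ.Rel} (i : Fin (σ.ar R)), det i i
  det_trans : ∀ {R : σ.Rel} {i j l : Fin (σ.ar R)}, det i j → det j l → det i l
  rank : σ.Pos → ℕ
  rank_le_of_incl : ∀ {p q}, incl p q → rank p ≤ rank q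
  incl_symm : ∀ {p q}, incl p q → rank q ≤ rank p → incl q p
  rank_le_of_det : ∀ {R : σ.Rel} {i j : Fin (σ.ar R)}, det i j → rank ⟨R, j⟩ ≤ rank ⟨R, i⟩
  det_symm : ∀ {R : σ.Rel} {i j : Fin (σ.ar R)}, det i j → rank ⟨R, i⟩ ≤ rank ⟨R, j⟩ → det j i

namespace RankedDeps

variable (D : RankedDeps σ)

/-- Mutual inclusion of positions. -/
def posSetoid : Setoid σ.Pos where
  r p q := D.incl p q ∧ D.incl q p
  iseqv := ⟨fun p => ⟨D.incl_refl p, D.incl_refl p⟩, fun h => ⟨h.2, h.1⟩,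
    fun h h' => ⟨D.incl_trans h.1 h'.1, D.incl_trans h'.2 h.2⟩⟩

/-- Mutual determination of the positions of a relation; its classes are called blocks. -/
def blockSetoid (R : σ.Rel) : Setoid (Fin (σ.ar R)) where
  r i j := D.det i j ∧ D.det j i
  iseqv := ⟨fun i => ⟨D.det_refl i, D.det_refl i⟩, fun h => ⟨h.2, h.1⟩,
    fun h h' => ⟨D.det_trans h.1 h'.1, D.det_trans h'.2 h.2⟩⟩

/-- A canonical representative of the class of `p` under mutual inclusion. -/
noncomputable def posRep (p : σ.Pos) : σ.Pos := (Quotient.mk D.posSetoid p).out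

/-- A canonical representative of the block of `i`. -/
noncomputable def blockRep {R : σ.Rel} (i : Fin (σ.ar R)) : Fin (σ.ar R) :=
  (Quotient.mk (D.blockSetoid R) i).out

variable {D} {p q : σ.Pos} {R : σ.Rel} {i j : Fin (σ.ar R)}

theorem posRep_incl : D.incl (D.posRep p) p := (@Quotient.mk_out _ D.posSetoid p).1

theorem incl_posRep : D.incl p (D.posRep p) := (@Quotient.mk_out _ D.posSetoid p).2

theorem blockRep_det : D.det (D.blockRep i) i := (@Quotient.mk_out _ (D.blockSetoid R) i).1

theorem det_blockRep : D.det i (D.blockRep i) := (@Quotient.mk_out _ (D.blockSetoid R) i).2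

theorem posRep_eq (hpq : D.incl p q) (hqp : D.incl q p) : D.posRep p = D.posRep q :=
  congrArg Quotient.out (Quotient.sound (s := D.posSetoid) ⟨hpq, hqp⟩)

theorem blockRep_eq (hij : D.det i j) (hji : D.det j i) : D.blockRep i = D.blockRep j :=
  congrArg Quotient.out (Quotient.sound (s := D.blockSetoid R) ⟨hij, hji⟩)

theorem posRep_posRep : D.posRep (D.posRep p) = D.posRep p :=
  posRep_eq posRep_incl incl_posRep

theorem blockRep_blockRep : D.blockRep (D.blockRep i) = D.blockRep i :=
  blockRep_eq blockRep_det det_blockRep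

theorem det_of_blockRep_eq (h : D.blockRep i = D.blockRep j) : D.det i j :=
  D.det_trans det_blockRep (h ▸ blockRep_det)

theorem rank_posRep : D.rank (D.posRep p) = D.rank p :=
  le_antisymm (D.rank_le_of_incl posRep_incl) (D.rank_le_of_incl incl_posRep)

theorem rank_blockRep : D.rank ⟨R, D.blockRep i⟩ = D.rank ⟨R, i⟩ :=
  le_antisymm (D.rank_le_of_det det_blockRep) (D.rank_le_of_det blockRep_det)

/-- `M` is a (possibly infinite) model of the inclusions of `D` into which `I` maps by `c`. -/
structure IsModelOf (D : RankedDeps σ) (I : Inst σ α) (M : Inst σ β) (c : α → β) : Prop where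
  hom : IsHom I M c
  incl : ∀ {p q}, D.incl p q → Includes M p q

end RankedDeps

/-! ### Dependencies valid in finite models -/

section CardinalityOfProjections

variable {I : Inst σ α} {p q : σ.Pos} {R : σ.Rel} {i j : Fin (σ.ar R)}

theorem Includes.ncard_le (h : Includes I p q) (hI : I.Finite) :
    {a | occursAt I p a}.ncard ≤ {a | occursAt I q a}.ncard :=
  Set.ncard_le_ncard h (finite_setOf_occursAt hI q)

theorem Includes.symm_of_ncard_le (h : Includes I p q) (hI : I.Finite)
    (hle : {a | occursAt I q a}.ncard ≤ {a | occursAt I p a}.ncard) : Includes I q p :=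
  (Set.eq_of_subset_of_ncard_le (s := {a | occursAt I p a}) h hle
    (finite_setOf_occursAt hI q)).ge

theorem Determines.exists_image_eq (h : Determines I {i} j) :
    ∃ g : α → α, (∀ t : Fin (σ.ar R) → α, (⟨R, t⟩ : Fact σ α) ∈ I → g (t i) = t j) ∧
      g '' {a | occursAt I ⟨R, i⟩ a} = {a | occursAt I ⟨R, j⟩ a} := by
  have hvalue : ∀ a, ∃ b, ∀ t : Fin (σ.ar R) → α, (⟨R, t⟩ : Fact σ α) ∈ I → t i = a → b = t j := by
    intro a
    by_cases ha : occursAt I ⟨R, i⟩ a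
    · obtain ⟨u, hu, rfl⟩ := ha
      exact ⟨u j, fun t ht heq => h.of_occursAt hu ht heq.symm⟩
    · exact ⟨a, fun t ht heq => absurd ⟨t, ht, heq⟩ ha⟩
  choose g hg using hvalue
  refine ⟨g, fun t ht => hg _ t ht rfl, Set.Subset.antisymm ?_ ?_⟩
  · rintro _ ⟨_, ⟨t, ht, rfl⟩, rfl⟩
    exact ⟨t, ht, (hg _ t ht rfl).symm⟩
  · rintro _ ⟨t, ht, rfl⟩
    exact ⟨t i, ⟨t, ht, rfl⟩, hg _ t ht rfl⟩

theorem Determines.ncard_le (h : Determines I {i} j) (hI : I.Finite) :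
    {a | occursAt I ⟨R, j⟩ a}.ncard ≤ {a | occursAt I ⟨R, i⟩ a}.ncard := by
  obtain ⟨g, -, himage⟩ := h.exists_image_eq
  rw [← himage]
  exact Set.ncard_image_le (finite_setOf_occursAt hI _)

theorem Determines.symm_of_ncard_le (h : Determines I {i} j) (hI : I.Finite)
    (hle : {a | occursAt I ⟨R, i⟩ a}.ncard ≤ {a | occursAt I ⟨R, j⟩ a}.ncard) :
    Determines I {j} i := by
  have hcard := le_antisymm (h.ncard_le hI) hle
  obtain ⟨g, hg, himage⟩ := h.exists_image_eq
  rw [← himage] at hcard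
  intro t u ht hu heq
  refine Set.injOn_of_ncard_image_eq hcard (finite_setOf_occursAt hI _)
    (occursAt_of_mem ht i) (occursAt_of_mem hu i) ?_
  rw [hg t ht, hg u hu, heq j rfl]

end CardinalityOfProjections

/-- In every finite model, the projection to `p` has at most as many elements as that to `q`. -/
def ProjectionLE (Su : Set (UID σ)) (Sf : Set (FD σ)) (p q : σ.Pos) : Prop :=
  ∀ I : Inst σ ℕ, I.Finite → satAllC I Su Sf →
    {a | occursAt I p a}.ncard ≤ {a | occursAt I q a}.ncard

section FiniteDeps

variable {Su : Set (UID σ)} {Sf : Set (FD σ)} {p q r : σ.Pos}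

theorem ProjectionLE.trans (hpq : ProjectionLE Su Sf p q) (hqr : ProjectionLE Su Sf q r) :
    ProjectionLE Su Sf p r := fun I hI hsat =>
  (hpq I hI hsat).trans (hqr I hI hsat)

theorem ProjectionLE.ncard_le (h : ProjectionLE Su Sf p q) :
    {r | ProjectionLE Su Sf r p}.ncard ≤ {r | ProjectionLE Su Sf r q}.ncard :=
  Set.ncard_le_ncard (fun _ hr => hr.trans h) (Set.toFinite _)

theorem ProjectionLE.symm_of_ncard_le (h : ProjectionLE Su Sf p q)
    (hle : {r | ProjectionLE Su Sf r q}.ncard ≤ {r | ProjectionLE Su Sf r p}.ncard) :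
    ProjectionLE Su Sf q p := by
  have heq : {r | ProjectionLE Su Sf r p} = {r | ProjectionLE Su Sf r q} :=
    Set.eq_of_subset_of_ncard_le (fun _ hr => hr.trans h) hle (Set.toFinite _)
  have hq : q ∈ {r | ProjectionLE Su Sf r q} := fun _ _ _ => le_rfl
  exact heq.ge hq

/-- The inclusions and unary functional dependencies that hold in all finite models. A position
is ranked by the number of positions whose projections are never larger in a finite model;
reversibility is the cycle rule for finite implication, which comes from the fact that
inclusions and surjections between finite sets of equal size are bijective. -/
noncomputable def finiteDeps (Su : Set (UID σ)) (Sf : Set (FD σ)) : RankedDeps σ where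
  incl p q := ∀ I : Inst σ ℕ, I.Finite → satAllC I Su Sf → Includes I p q
  incl_refl _ _ _ _ _ ha := ha
  incl_trans hpq hqr I hI hsat a ha := hqr I hI hsat a (hpq I hI hsat a ha)
  det i j := ∀ I : Inst σ ℕ, I.Finite → satAllC I Su Sf → Determines I {i} j
  det_refl i _ _ _ _ _ _ _ heq := heq i rfl
  det_trans hij hjl I hI hsat _ _ ht hu heq :=
    (hjl I hI hsat).of_occursAt ht hu (hij I hI hsat _ _ ht hu heq)
  rank p := {r | ProjectionLE Su Sf r p}.ncard
  rank_le_of_incl h := ProjectionLE.ncard_le fun I hI hsat => (h I hI hsat).ncard_le hI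
  incl_symm h hrank I hI hsat := (h I hI hsat).symm_of_ncard_le hI <|
    ProjectionLE.symm_of_ncard_le (fun I hI hsat => (h I hI hsat).ncard_le hI) hrank I hI hsat
  rank_le_of_det h := ProjectionLE.ncard_le fun I hI hsat => (h I hI hsat).ncard_le hI
  det_symm h hrank I hI hsat := (h I hI hsat).symm_of_ncard_le hI <|
    ProjectionLE.symm_of_ncard_le (fun I hI hsat => (h I hI hsat).ncard_le hI) hrank I hI hsat

end FiniteDeps

/-! ### The base model -/

/-- Addresses of the pieces from which the base model is glued, with coordinates in `X`. Besides
the `root`, which contains the given instance, `imported A c x c'` is the piece in which the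
element `(A, c, x)` occurs at the positions of class `c'`, and `child A R b x b'` is the piece in
which the `R`-fact with block `b` at coordinate `x` of `A` has its block `b'`. The `generic`
piece replaces a child whose ancestry has been forgotten. -/
inductive Address (σ : Sig) (X : Type) where
  | root : Address σ X
  | generic : Address σ X
  | imported : Address σ X → σ.Pos → X → σ.Pos → Address σ X
  | child : Address σ X → (R : σ.Rel) → Fin (σ.ar R) → X → Fin (σ.ar R) → Address σ X

namespace Address

variable {X : Type}

/-- Keep only the last `m` child steps of an address. -/
def truncate : ℕ → Address σ X → Address σ X
  | _, root => root
  | _, generic => generic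
  | m, imported A c x c' => imported (truncate m A) c x c'
  | 0, child _ _ _ _ _ => generic
  | m + 1, child A R b x b' => child (truncate m A) R b x b'

/-- The number of child steps of an address. -/
def childDepth : Address σ X → ℕ
  | root => 0
  | generic => 0
  | imported A _ _ _ => childDepth A
  | child A _ _ _ _ => childDepth A + 1

/-- The number of steps of an address. -/
def height : Address σ X → ℕ
  | root => 0
  | generic => 0
  | imported A _ _ _ => height A + 1
  | child A _ _ _ _ => height A + 1

theorem childDepth_truncate_le (m : ℕ) (A : Address σ X) : (truncate m A).childDepth ≤ m := by
  induction A generalizing m with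
  | root => simp [truncate, childDepth]
  | generic => simp [truncate, childDepth]
  | imported A c x c' ih => simpa [truncate, childDepth] using ih m
  | child A R b x b' ih => cases m <;> simp [truncate, childDepth, ih]

theorem truncate_of_childDepth_le {m : ℕ} {A : Address σ X} (h : A.childDepth ≤ m) :
    truncate m A = A := by
  induction A generalizing m with
  | root => rfl
  | generic => rfl
  | imported A c x c' ih => simpa [truncate] using ih h
  | child A R b x b' ih =>
    cases m with
    | zero => simp [childDepth] at h
    | succ m => simpa [truncate] using ih (by simpa [childDepth] using h)

theorem truncate_eq_root_iff {m : ℕ} {A : Address σ X} : truncate m A = root ↔ A = root := by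
  cases A <;> cases m <;> simp [truncate]

theorem truncate_eq_child_iff {m : ℕ} {A A₀ : Address σ X} {R : σ.Rel} {b b₀ : Fin (σ.ar R)}
    {x₀ : X} : truncate (m + 1) A = child A₀ R b₀ x₀ b ↔
      ∃ A₁, A = child A₁ R b₀ x₀ b ∧ A₀ = truncate m A₁ := by
  constructor
  · intro h
    cases A with
    | root => simp [truncate] at h
    | generic => simp [truncate] at h
    | imported => simp [truncate] at h
    | child A R' b' x' b'' =>
      simp only [truncate, child.injEq] at h
      obtain ⟨hA, rfl, hb', hx', hb''⟩ := h
      simp only [heq_eq_eq] at hb' hb''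
      exact ⟨A, by rw [hb', hx', hb''], hA.symm⟩
  · rintro ⟨A₁, rfl, rfl⟩
    rfl

theorem truncate_zero_ne_child {A A₀ : Address σ X} {R : σ.Rel} {b b₀ : Fin (σ.ar R)} {x₀ : X} :
    truncate 0 A ≠ child A₀ R b₀ x₀ b := by
  cases A <;> simp [truncate]

theorem finite_setOf_height_le [Finite X] (d : ℕ) : {A : Address σ X | A.height ≤ d}.Finite := by
  induction d with
  | zero =>
    refine (Set.toFinite {root, generic}).subset fun A hA => ?_
    cases A <;> simp [height] at hA ⊢
  | succ d ih =>
    have himportedFin := (ih.prod (Set.finite_univ (α := σ.Pos × X × σ.Pos))).image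
      fun z => imported z.1 z.2.1 z.2.2.1 z.2.2.2
    have hchild :=
      (ih.prod (Set.finite_univ (α := Σ R : σ.Rel, Fin (σ.ar R) × X × Fin (σ.ar R)))).image
        fun z => child z.1 z.2.1 z.2.2.1 z.2.2.2.1 z.2.2.2.2
    refine (((Set.toFinite {root, generic}).union himportedFin).union hchild).subset ?_
    intro A hA
    cases A with
    | root => simp
    | generic => simp
    | imported A c x c' =>
      exact Or.inl (Or.inr ⟨(A, c, x, c'), ⟨by simpa [height] using hA, trivial⟩, rfl⟩)
    | child A R b x b' =>
      exact Or.inr ⟨(A, ⟨R, b, x, b'⟩), ⟨by simpa [height] using hA, trivial⟩, rfl⟩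

end Address

open Address ReducedWord

/-- The data from which the base model is built: an instance in which the dependency of position
`j` on the representative of its block is given by the restriction of a permutation of the
elements, and the radius up to which the model has to look like a tree. -/
structure Seed (σ : Sig) (α : Type) where
  deps : RankedDeps σ
  inst : Inst σ α
  perm : σ.Pos → Equiv.Perm α
  perm_apply : ∀ {R : σ.Rel} {t : Fin (σ.ar R) → α}, (⟨R, t⟩ : Fact σ α) ∈ inst →
    ∀ j, perm ⟨R, j⟩ (t (deps.blockRep j)) = t j
  radius : ℕ

namespace Seed

variable (C : Seed σ α)

/-- Positions that are populated in every model of the inclusions over the seed. -/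
inductive Reachable : σ.Pos → Prop
  | seed {p : σ.Pos} {a : α} : occursAt C.inst p a → Reachable p
  | incl {p q : σ.Pos} : C.deps.incl p q → Reachable p → Reachable q
  | rel {R : σ.Rel} {i : Fin (σ.ar R)} (j : Fin (σ.ar R)) : Reachable ⟨R, i⟩ → Reachable ⟨R, j⟩

/-- Coordinates within a piece. -/
abbrev Coord : Type := α × ReducedWord σ.Pos (C.radius + 1)

/-- Addresses over the coordinates of the seed. -/
abbrev Addr : Type := Address σ C.Coord

/-- Elements of the base model: those of the seed, and those created at some address, class of
positions, and coordinate. -/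
abbrev Elem : Type := α ⊕ (C.Addr × σ.Pos × C.Coord)

open Classical in
/-- The passage in piece `A` from the coordinate of a fact to the coordinate of its element at
`p`. Facts of the seed sit in the root at coordinates with empty word, and there the passage does
not change the word. -/
noncomputable def shift (A : C.Addr) (p : σ.Pos) : C.Coord ≃ C.Coord :=
  Equiv.prodShear (C.perm p) fun a =>
    if A = root ∧ occursAt C.inst ⟨p.1, C.deps.blockRep p.2⟩ a then cut p else toggle p

/-- The rank of the positions by which a piece is entered. -/
def entryRank : C.Addr → Option ℕ
  | root => none
  | generic => none
  | imported _ _ _ c' => some (C.deps.rank c')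
  | child _ R _ _ b' => some (C.deps.rank ⟨R, b'⟩)

/-- A piece other than the root and the generic one only serves positions of one rank. -/
def RankFits (A : C.Addr) (p : σ.Pos) : Prop := ∀ r ∈ C.entryRank A, C.deps.rank p = r

/-- The block `b` at coordinate `x` of the piece `A` belongs to a fact of the seed. -/
def IsSeedNode (A : C.Addr) (R : σ.Rel) (b : Fin (σ.ar R)) (x : C.Coord) : Prop :=
  A = root ∧ x.2 = nil ∧ occursAt C.inst ⟨R, b⟩ x.1

/-- The block `b` at coordinate `x` of `A` belongs to the fact at block `b₀` and coordinate `x₀`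
of `A₀`. -/
def IsParentNode {R : σ.Rel} (A₀ : C.Addr) (b₀ : Fin (σ.ar R)) (x₀ : C.Coord) (A : C.Addr)
    (b : Fin (σ.ar R)) (x : C.Coord) : Prop :=
  A = child A₀ R b₀ x₀ b ∧ x = (x₀.1, nil)

/-- The block `b` at coordinate `x` of `A` belongs to a fact not created there. -/
def Reserved (A : C.Addr) (R : σ.Rel) (b : Fin (σ.ar R)) (x : C.Coord) : Prop :=
  C.IsSeedNode A R b x ∨ ∃ A₀ b₀ x₀, C.IsParentNode (R := R) A₀ b₀ x₀ A b x

/-- The seed element `a` must occur at the position `q` in every model of the inclusions. -/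
def Needs (a : α) (q : σ.Pos) : Prop := ∃ p, occursAt C.inst p a ∧ C.deps.incl p q

/-- The element of class `c` at coordinate `x` of the piece `A` is `v`, created elsewhere. -/
inductive IsForeign : C.Addr → σ.Pos → C.Coord → C.Elem → Prop
  | seed {a : α} {c : σ.Pos} : C.Needs a c → IsForeign root c (a, nil) (.inl a)
  | imported (A : C.Addr) (c : σ.Pos) (x : C.Coord) (c' : σ.Pos) :
      IsForeign (imported A c x c') c' (x.1, nil) (.inr (A, c, x))

open Classical in
/-- The element of class `c` at coordinate `x` of the piece `A`. -/
noncomputable def elemOf (A : C.Addr) (c : σ.Pos) (x : C.Coord) : C.Elem :=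
  if h : ∃ v, C.IsForeign A c x v then h.choose else .inr (A, c, x)

/-- The piece `imported A c x c'` is needed (for some coordinate `x`). -/
structure IsImport (A : C.Addr) (c c' : σ.Pos) : Prop where
  rankFits : C.RankFits A c
  reachable : C.Reachable c
  src_rep : C.deps.posRep c = c
  dst_rep : C.deps.posRep c' = c'
  incl : C.deps.incl c c'
  rank_lt : C.deps.rank c < C.deps.rank c'

/-- An `R`-fact is created with its block `b` at coordinate `x` of the piece `A`. -/
structure Hosts (A : C.Addr) (R : σ.Rel) (b : Fin (σ.ar R)) (x : C.Coord) : Prop where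
  rankFits : C.RankFits A ⟨R, b⟩
  reachable : C.Reachable ⟨R, b⟩
  rep : C.deps.blockRep b = b
  not_reserved : ¬ C.Reserved A R b x

/-- The addresses of the pieces that occur in the base model, up to the depth bound. -/
def ValidAddr : C.Addr → Prop
  | root => True
  | generic => True
  | imported A c _ c' => ValidAddr A ∧ C.IsImport A c c'
  | child A R b x b' => ValidAddr A ∧ C.Hosts A R b x ∧ C.deps.blockRep b' = b' ∧ b' ≠ b

/-- The position `p` is populated in the piece `A` of the base model. -/
structure ValidAt (A : C.Addr) (p : σ.Pos) : Prop where
  addr : C.ValidAddr A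
  depth : A.childDepth ≤ C.radius + 1
  rankFits : C.RankFits A p
  reachable : C.Reachable p

/-- The element at position `j` of a fact having the block of `j` at coordinate `x` of `A`. -/
noncomputable def elemAt (A : C.Addr) (R : σ.Rel) (x : C.Coord) (j : Fin (σ.ar R)) : C.Elem :=
  C.elemOf A (C.deps.posRep ⟨R, j⟩) (C.shift A ⟨R, j⟩ x)

open Classical in
/-- The fact created with its block `b` at coordinate `x` of `A`; its other blocks lie in child
pieces. -/
noncomputable def createdFact (A : C.Addr) (R : σ.Rel) (b : Fin (σ.ar R)) (x : C.Coord)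
    (j : Fin (σ.ar R)) : C.Elem :=
  if C.deps.blockRep j = b then C.elemAt A R x j
  else C.elemAt (child (truncate C.radius A) R b x (C.deps.blockRep j)) R (x.1, nil) j

/-- The base model. -/
def baseInst : Inst σ C.Elem :=
  {F | (∃ t, (⟨F.1, t⟩ : Fact σ α) ∈ C.inst ∧ F.2 = fun j => .inl (t j)) ∨
    ∃ A b x, C.ValidAt A ⟨F.1, b⟩ ∧ C.Hosts A F.1 b x ∧ F.2 = C.createdFact A F.1 b x}

variable {C} {A A' : C.Addr} {R : σ.Rel} {b i j : Fin (σ.ar R)} {c p q : σ.Pos} {x x' : C.Coord}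
  {v : C.Elem} {m : ℕ}

theorem mem_baseInst_of_seed {t : Fin (σ.ar R) → α} (ht : (⟨R, t⟩ : Fact σ α) ∈ C.inst) :
    (⟨R, fun j => .inl (t j)⟩ : Fact σ C.Elem) ∈ C.baseInst :=
  Or.inl ⟨t, ht, rfl⟩

theorem createdFact_mem_baseInst (hA : C.ValidAt A ⟨R, b⟩) (hx : C.Hosts A R b x) :
    (⟨R, C.createdFact A R b x⟩ : Fact σ C.Elem) ∈ C.baseInst :=
  Or.inr ⟨A, b, x, hA, hx, rfl⟩

theorem mem_baseInst_cases {F : Fin (σ.ar R) → C.Elem}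
    (hF : (⟨R, F⟩ : Fact σ C.Elem) ∈ C.baseInst) :
    (∃ t, (⟨R, t⟩ : Fact σ α) ∈ C.inst ∧ F = fun j => .inl (t j)) ∨
      ∃ A b x, C.ValidAt A ⟨R, b⟩ ∧ C.Hosts A R b x ∧ F = C.createdFact A R b x :=
  hF

open Classical in
theorem shift_truncate : C.shift (truncate m A) p = C.shift A p := by
  unfold shift
  congr 1
  funext a
  exact if_congr (and_congr truncate_eq_root_iff Iff.rfl) rfl rfl

theorem createdFact_of_eq (h : C.deps.blockRep j = b) :
    C.createdFact A R b x j = C.elemAt A R x j :=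
  if_pos h

theorem createdFact_of_ne (h : C.deps.blockRep j ≠ b) : C.createdFact A R b x j =
    C.elemAt (child (truncate C.radius A) R b x (C.deps.blockRep j)) R (x.1, nil) j :=
  if_neg h

theorem RankFits.congr (hA : C.RankFits A p) (h : C.deps.rank p = C.deps.rank q) :
    C.RankFits A q := fun r hr => h ▸ hA r hr

theorem RankFits.truncate (hA : C.RankFits A p) (m : ℕ) : C.RankFits (truncate m A) p := by
  cases A <;> cases m <;> first | exact hA | simp [RankFits, Address.truncate, entryRank]

theorem Reserved.of_truncate (h : C.Reserved (truncate m A) R b x) : C.Reserved A R b x := by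
  rcases h with ⟨hroot, hx⟩ | ⟨A₀, b₀, x₀, hA, hx⟩
  · exact Or.inl ⟨truncate_eq_root_iff.1 hroot, hx⟩
  · cases m with
    | zero => exact absurd hA truncate_zero_ne_child
    | succ m =>
      obtain ⟨A₁, hA₁, -⟩ := truncate_eq_child_iff.1 hA
      exact Or.inr ⟨A₁, b₀, x₀, hA₁, hx⟩

theorem Hosts.truncate (h : C.Hosts A R b x) (m : ℕ) : C.Hosts (truncate m A) R b x where
  rankFits := h.rankFits.truncate m
  reachable := h.reachable
  rep := h.rep
  not_reserved hres := h.not_reserved hres.of_truncate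

theorem IsImport.truncate {c' : σ.Pos} (h : C.IsImport A c c') (m : ℕ) :
    C.IsImport (truncate m A) c c' :=
  { h with rankFits := h.rankFits.truncate m }

theorem ValidAddr.truncate (h : C.ValidAddr A) (m : ℕ) : C.ValidAddr (truncate m A) := by
  induction A generalizing m with
  | root => trivial
  | generic => trivial
  | imported A c x c' ih => exact ⟨ih h.1 m, h.2.truncate m⟩
  | child A R b x b' ih =>
    cases m with
    | zero => trivial
    | succ m => exact ⟨ih h.1 m, h.2.1.truncate m, h.2.2⟩

theorem ValidAt.blockRep (h : C.ValidAt A ⟨R, j⟩) : C.ValidAt A ⟨R, C.deps.blockRep j⟩ where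
  addr := h.addr
  depth := h.depth
  rankFits := h.rankFits.congr RankedDeps.rank_blockRep.symm
  reachable := h.reachable.rel _

theorem ValidAt.of_blockRep (h : C.ValidAt A ⟨R, C.deps.blockRep j⟩) : C.ValidAt A ⟨R, j⟩ where
  addr := h.addr
  depth := h.depth
  rankFits := h.rankFits.congr RankedDeps.rank_blockRep
  reachable := h.reachable.rel _

theorem ValidAt.posRep (h : C.ValidAt A p) : C.ValidAt A (C.deps.posRep p) where
  addr := h.addr
  depth := h.depth
  rankFits := h.rankFits.congr RankedDeps.rank_posRep.symm
  reachable := h.reachable.incl RankedDeps.incl_posRep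

theorem ValidAt.of_posRep (h : C.ValidAt A (C.deps.posRep p)) : C.ValidAt A p where
  addr := h.addr
  depth := h.depth
  rankFits := h.rankFits.congr RankedDeps.rank_posRep
  reachable := h.reachable.incl RankedDeps.posRep_incl

theorem ValidAt.child (hA : C.ValidAt A ⟨R, b⟩) (hx : C.Hosts A R b x)
    (hj : C.deps.blockRep j ≠ b) :
    C.ValidAt (child (truncate C.radius A) R b x (C.deps.blockRep j)) ⟨R, j⟩ where
  addr := ⟨hA.addr.truncate _, hx.truncate _, RankedDeps.blockRep_blockRep, hj⟩
  depth := Nat.succ_le_succ (childDepth_truncate_le _ _)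
  rankFits r hr := by
    rw [← Option.mem_some_iff.1 hr, RankedDeps.rank_blockRep]
  reachable := hx.reachable.rel j

theorem IsForeign.unique {v' : C.Elem} (h : C.IsForeign A c x v) (h' : C.IsForeign A c x v') :
    v = v' := by
  cases h <;> cases h' <;> rfl

theorem IsForeign.elemOf_eq (h : C.IsForeign A c x v) : C.elemOf A c x = v := by
  have hex : ∃ v, C.IsForeign A c x v := ⟨v, h⟩
  rw [elemOf, dif_pos hex]
  exact hex.choose_spec.unique h

theorem elemOf_of_not_isForeign (h : ¬ ∃ v, C.IsForeign A c x v) :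
    C.elemOf A c x = .inr (A, c, x) :=
  dif_neg h

theorem IsForeign.coord_snd (h : C.IsForeign A c x v) : x.2 = nil := by
  cases h <;> rfl

theorem IsForeign.ne_inr (hA : C.ValidAddr A) (h : C.IsForeign A c x v) (A' : C.Addr)
    (x' : C.Coord) : v ≠ .inr (A', c, x') := by
  rintro rfl
  cases h
  exact hA.2.rank_lt.false

theorem IsForeign.injective (h : C.IsForeign A c x v) (h' : C.IsForeign A' c x' v) :
    A = A' ∧ x = x' := by
  cases h <;> cases h' <;> exact ⟨rfl, rfl⟩

theorem elemOf_injective (hA : C.ValidAddr A) (hA' : C.ValidAddr A')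
    (h : C.elemOf A c x = C.elemOf A' c x') : A = A' ∧ x = x' := by
  by_cases hx : ∃ v, C.IsForeign A c x v <;> by_cases hx' : ∃ v, C.IsForeign A' c x' v
  · obtain ⟨v, hv⟩ := hx
    obtain ⟨v', hv'⟩ := hx'
    obtain rfl : v = v' := by rwa [hv.elemOf_eq, hv'.elemOf_eq] at h
    exact hv.injective hv'
  · obtain ⟨v, hv⟩ := hx
    rw [hv.elemOf_eq, elemOf_of_not_isForeign hx'] at h
    exact absurd h (hv.ne_inr hA _ _)
  · obtain ⟨v, hv⟩ := hx'
    rw [hv.elemOf_eq, elemOf_of_not_isForeign hx] at h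
    exact absurd h.symm (hv.ne_inr hA' _ _)
  · rw [elemOf_of_not_isForeign hx, elemOf_of_not_isForeign hx'] at h
    cases h
    exact ⟨rfl, rfl⟩

theorem elemAt_root_of_mem {t : Fin (σ.ar R) → α} (ht : (⟨R, t⟩ : Fact σ α) ∈ C.inst)
    (j : Fin (σ.ar R)) : C.elemAt root R (t (C.deps.blockRep j), nil) j = .inl (t j) := by
  have hshift : C.shift root ⟨R, j⟩ (t (C.deps.blockRep j), nil) = (t j, nil) := by
    simp [shift, occursAt_of_mem ht, cut_nil, C.perm_apply ht]
  rw [elemAt, hshift]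
  exact IsForeign.elemOf_eq (.seed ⟨⟨R, j⟩, occursAt_of_mem ht j, RankedDeps.incl_posRep⟩)

theorem exists_elemAt_of_mem_baseInst {F : Fin (σ.ar R) → C.Elem}
    (hF : (⟨R, F⟩ : Fact σ C.Elem) ∈ C.baseInst) (i : Fin (σ.ar R)) :
    ∃ A x, C.ValidAt A ⟨R, i⟩ ∧
      ∀ j, C.deps.blockRep j = C.deps.blockRep i → F j = C.elemAt A R x j := by
  rcases mem_baseInst_cases hF with ⟨t, ht, rfl⟩ | ⟨A, b, x, hA, hx, rfl⟩
  · refine ⟨root, (t (C.deps.blockRep i), nil), ⟨trivial, Nat.zero_le _, nofun,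
      .seed (occursAt_of_mem ht i)⟩, fun j hj => ?_⟩
    rw [← hj, elemAt_root_of_mem ht]
  · by_cases hi : C.deps.blockRep i = b
    · subst hi
      exact ⟨A, x, hA.of_blockRep, fun j hj => createdFact_of_eq hj⟩
    · refine ⟨_, (x.1, nil), hA.child hx hi, fun j hj => ?_⟩
      rw [createdFact_of_ne (hj ▸ hi), hj]

theorem occursAt_elemAt_of_reserved (hA : C.ValidAt A ⟨R, j⟩)
    (hx : C.Reserved A R (C.deps.blockRep j) x) :
    occursAt C.baseInst ⟨R, j⟩ (C.elemAt A R x j) := by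
  rcases hx with ⟨rfl, hx, t, ht, heq⟩ | ⟨A₀, b₀, x₀, rfl, rfl⟩
  · obtain rfl : x = (t (C.deps.blockRep j), nil) := Prod.ext heq.symm hx
    rw [elemAt_root_of_mem ht]
    exact ⟨_, mem_baseInst_of_seed ht, rfl⟩
  · obtain ⟨hA₀, hhost, -, hne⟩ := hA.addr
    have hdepth : A₀.childDepth ≤ C.radius := Nat.le_of_succ_le_succ hA.depth
    refine ⟨_, createdFact_mem_baseInst
      ⟨hA₀, hdepth.trans (Nat.le_succ _), hhost.rankFits, hhost.reachable⟩ hhost, ?_⟩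
    rw [createdFact_of_ne hne, truncate_of_childDepth_le hdepth]

theorem occursAt_baseInst_iff : occursAt C.baseInst p v ↔
    ∃ A x, C.ValidAt A p ∧ v = C.elemOf A (C.deps.posRep p) x := by
  obtain ⟨R, j⟩ := p
  constructor
  · rintro ⟨F, hF, rfl⟩
    obtain ⟨A, x, hA, hF⟩ := exists_elemAt_of_mem_baseInst hF j
    exact ⟨A, _, hA, hF j rfl⟩
  · rintro ⟨A, y, hA, rfl⟩
    obtain ⟨x, rfl⟩ := (C.shift A ⟨R, j⟩).surjective y
    by_cases hx : C.Reserved A R (C.deps.blockRep j) x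
    · exact occursAt_elemAt_of_reserved hA hx
    · have hhost : C.Hosts A R (C.deps.blockRep j) x :=
        ⟨hA.blockRep.rankFits, hA.blockRep.reachable, RankedDeps.blockRep_blockRep, hx⟩
      exact ⟨_, createdFact_mem_baseInst hA.blockRep hhost, createdFact_of_eq rfl⟩

theorem IsForeign.exists_of_incl {c' : σ.Pos} (h : C.IsForeign A c x v) (hA : C.ValidAt A c)
    (hc' : C.deps.posRep c' = c') (hincl : C.deps.incl c c')
    (hrank : C.deps.rank c < C.deps.rank c') :
    ∃ A' x', C.ValidAt A' c' ∧ C.IsForeign A' c' x' v := by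
  have hreach := hA.reachable.incl hincl
  cases h with
  | seed hneeds =>
    obtain ⟨p, hp, hpc⟩ := hneeds
    exact ⟨root, _, ⟨trivial, hA.depth, nofun, hreach⟩,
      .seed ⟨p, hp, C.deps.incl_trans hpc hincl⟩⟩
  | imported A₀ c₀ x₀ c =>
    have hneeded : C.IsImport A₀ c₀ c' :=
      { hA.addr.2 with
        dst_rep := hc'
        incl := C.deps.incl_trans hA.addr.2.incl hincl
        rank_lt := hA.addr.2.rank_lt.trans hrank }
    refine ⟨.imported A₀ c₀ x₀ c', _, ⟨⟨hA.addr.1, hneeded⟩, hA.depth, ?_, hreach⟩,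
      .imported _ _ _ _⟩
    exact fun r hr => Option.mem_some_iff.1 hr

theorem exists_elemOf_eq_of_rank_lt {c' : σ.Pos} (hA : C.ValidAt A c)
    (hc : C.deps.posRep c = c) (hc' : C.deps.posRep c' = c') (hincl : C.deps.incl c c')
    (hrank : C.deps.rank c < C.deps.rank c') (x : C.Coord) :
    ∃ A' x', C.ValidAt A' c' ∧ C.elemOf A c x = C.elemOf A' c' x' := by
  by_cases hx : ∃ v, C.IsForeign A c x v
  · obtain ⟨v, hv⟩ := hx
    obtain ⟨A', x', hA', hv'⟩ := hv.exists_of_incl hA hc' hincl hrank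
    exact ⟨A', x', hA', by rw [hv.elemOf_eq, hv'.elemOf_eq]⟩
  · refine ⟨imported A c x c', (x.1, nil), ⟨⟨hA.addr, hA.rankFits, hA.reachable, hc, hc', hincl,
      hrank⟩, hA.depth, fun r hr => Option.mem_some_iff.1 hr, hA.reachable.incl hincl⟩, ?_⟩
    rw [elemOf_of_not_isForeign hx, (IsForeign.imported A c x c').elemOf_eq]

theorem includes_baseInst (h : C.deps.incl p q) : Includes C.baseInst p q := by
  intro v hv
  rw [occursAt_baseInst_iff] at hv ⊢
  obtain ⟨A, x, hA, rfl⟩ := hv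
  by_cases hrank : C.deps.rank q ≤ C.deps.rank p
  · have hrep := RankedDeps.posRep_eq h (C.deps.incl_symm h hrank)
    exact ⟨A, x, ValidAt.of_posRep (hrep ▸ hA.posRep), by rw [hrep]⟩
  · have hincl : C.deps.incl (C.deps.posRep p) (C.deps.posRep q) := C.deps.incl_trans
      RankedDeps.posRep_incl (C.deps.incl_trans h RankedDeps.incl_posRep)
    have hlt : C.deps.rank (C.deps.posRep p) < C.deps.rank (C.deps.posRep q) := by
      rw [RankedDeps.rank_posRep, RankedDeps.rank_posRep]
      exact not_le.1 hrank
    obtain ⟨A', x', hA', heq⟩ := exists_elemOf_eq_of_rank_lt hA.posRep RankedDeps.posRep_posRep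
      RankedDeps.posRep_posRep hincl hlt x
    exact ⟨A', x', hA'.of_posRep, heq⟩

theorem determines_baseInst (h : C.deps.blockRep j = C.deps.blockRep i) :
    Determines C.baseInst {i} j := by
  intro F F' hF hF' heq
  obtain ⟨A, x, hA, hblock⟩ := exists_elemAt_of_mem_baseInst hF i
  obtain ⟨A', x', hA', hblock'⟩ := exists_elemAt_of_mem_baseInst hF' i
  have hi := heq i rfl
  rw [hblock i rfl, hblock' i rfl] at hi
  obtain ⟨rfl, hshift⟩ := elemOf_injective hA.addr hA'.addr hi
  rw [hblock j h, hblock' j h, (C.shift A ⟨R, i⟩).injective hshift]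

theorem ValidAddr.height_le {r : ℕ} (hr : ∀ p, C.deps.rank p ≤ r) (hA : C.ValidAddr A) :
    A.height ≤ A.childDepth * (r + 1) + (C.entryRank A).getD 0 := by
  induction A with
  | root => simp [height]
  | generic => simp [height]
  | imported A c x c' ih =>
    have hentry : (C.entryRank A).getD 0 ≤ C.deps.rank c := by
      cases h : C.entryRank A with
      | none => exact Nat.zero_le _
      | some s => exact (hA.2.rankFits s h).ge
    have := ih hA.1
    have := hA.2.rank_lt
    simp only [height, childDepth, entryRank, Option.getD_some]
    omega
  | child A R b x b' ih =>
    have hentry : (C.entryRank A).getD 0 ≤ r := by cases A <;> simp [entryRank, hr]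
    have := ih hA.1
    simp only [height, childDepth, entryRank, Option.getD_some, Nat.add_mul]
    omega

theorem finite_setOf_validAddr [Finite α] :
    {A : C.Addr | C.ValidAddr A ∧ A.childDepth ≤ C.radius + 1}.Finite := by
  obtain ⟨r, hr⟩ := (Set.finite_range C.deps.rank).bddAbove
  replace hr : ∀ p, C.deps.rank p ≤ r := fun p => hr ⟨p, rfl⟩
  refine (finite_setOf_height_le ((C.radius + 1) * (r + 1) + r)).subset ?_
  rintro A ⟨hA, hdepth⟩
  have hentry : (C.entryRank A).getD 0 ≤ r := by cases A <;> simp [entryRank, hr]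
  exact (hA.height_le hr).trans (Nat.add_le_add (Nat.mul_le_mul_right _ hdepth) hentry)

variable (C) in
/-- The elements of the base model that are used by its facts. -/
def ValidElem : C.Elem → Prop
  | .inl _ => True
  | .inr (A, c, _) => C.ValidAt A c ∧ C.deps.posRep c = c

theorem finite_setOf_validElem [Finite α] : {v : C.Elem | C.ValidElem v}.Finite := by
  refine ((Set.finite_range Sum.inl).union ((finite_setOf_validAddr.prod
    (Set.finite_univ (α := σ.Pos × C.Coord))).image Sum.inr)).subset ?_
  rintro (a | ⟨A, c, x⟩) h
  · exact Or.inl ⟨a, rfl⟩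
  · exact Or.inr ⟨(A, c, x), ⟨⟨h.1.addr, h.1.depth⟩, trivial⟩, rfl⟩

theorem validElem_elemOf (hA : C.ValidAt A c) (hc : C.deps.posRep c = c) :
    C.ValidElem (C.elemOf A c x) := by
  by_cases hx : ∃ v, C.IsForeign A c x v
  · obtain ⟨v, hv⟩ := hx
    rw [hv.elemOf_eq]
    cases hv with
    | seed => trivial
    | imported A₀ c₀ x₀ c =>
      obtain ⟨hA₀, hneeded⟩ := hA.addr
      exact ⟨⟨hA₀, hA.depth, hneeded.rankFits, hneeded.reachable⟩, hneeded.src_rep⟩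
  · rw [elemOf_of_not_isForeign hx]
    exact ⟨hA, hc⟩

theorem validElem_of_occursAt (h : occursAt C.baseInst p v) : C.ValidElem v := by
  obtain ⟨A, x, hA, rfl⟩ := occursAt_baseInst_iff.1 h
  exact validElem_elemOf hA.posRep RankedDeps.posRep_posRep

end Seed

/-! ### Simulating the base model in the models of the inclusions -/

namespace Seed

open Address ReducedWord

section Pointers

variable (C : Seed σ α)

/-- The element has to occur at the given position in every model of the inclusions, because of
the seed or because of the class in which it was created. -/
def ElemNeeds : C.Elem → σ.Pos → Prop
  | .inl a, q => C.Needs a q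
  | .inr (_, c, _), q => C.deps.incl c q

/-- The element `u` of `M` occurs wherever `v` needs to occur. -/
def Compatible (M : Inst σ β) (v : C.Elem) (u : β) : Prop := ∀ q, C.ElemNeeds v q → occursAt M q u

/-- The first letter of the word of the element at coordinate `x` leads to a fact through its
position `p`. -/
def PointsToFact (A : C.Addr) (c : σ.Pos) (x : C.Coord) (p : σ.Pos) : Prop :=
  c = C.deps.posRep p ∧ x.2.1 = p :: ((C.shift A p).symm x).2.1

/-- The first letter of the word of the fact at coordinate `x` leads to its element at `i`. -/
def PointsToElem (A : C.Addr) (R : σ.Rel) (b : Fin (σ.ar R)) (x : C.Coord) (i : Fin (σ.ar R)) :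
    Prop :=
  C.deps.blockRep i = b ∧ x.2.1 = ⟨R, i⟩ :: (C.shift A ⟨R, i⟩ x).2.1

mutual

/-- Following the pointers from an element leads in fewer than the given number of steps to an
element created elsewhere. -/
def ElemAnchored : ℕ → C.Elem → Prop
  | 0, _ => False
  | _ + 1, .inl _ => True
  | m + 1, .inr (A, c, x) => ∃ p, C.PointsToFact A c x p ∧
      FactAnchored m A p.1 (C.deps.blockRep p.2) ((C.shift A p).symm x)

/-- Following the pointers from a fact leads in fewer than the given number of steps to an
element created elsewhere. -/
def FactAnchored : ℕ → C.Addr → (R : σ.Rel) → Fin (σ.ar R) → C.Coord → Prop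
  | 0, _, _, _, _ => False
  | m + 1, A, R, b, x =>
    (∃ A₀ b₀ x₀, C.IsParentNode A₀ b₀ x₀ A b x ∧ FactAnchored m A₀ R b₀ x₀) ∨
    ∃ i, C.PointsToElem A R b x i ∧
      ((∃ v, C.IsForeign A (C.deps.posRep ⟨R, i⟩) (C.shift A ⟨R, i⟩ x) v) ∨
        ElemAnchored m (C.elemAt A R x i))

end

mutual

/-- The element `u` of the model `M` looks, up to the given number of steps along the pointers,
like an element of the base model. -/
def ElemSim (M : Inst σ β) (φ : α → β) : ℕ → C.Elem → β → Prop
  | 0, v, u => C.Compatible M v u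
  | _ + 1, .inl a, u => C.Compatible M (.inl a) u ∧ u = φ a
  | m + 1, .inr (A, c, x), u => C.Compatible M (.inr (A, c, x)) u ∧
      (C.ElemAnchored (m + 1) (.inr (A, c, x)) → ∀ p, C.PointsToFact A c x p →
        ∃ t, (⟨p.1, t⟩ : Fact σ β) ∈ M ∧ t p.2 = u ∧
          FactSim M φ m A p.1 (C.deps.blockRep p.2) ((C.shift A p).symm x) t)

/-- The tuple `t` of the model `M` looks, up to the given number of steps along the pointers,
like a fact of the base model. -/
def FactSim (M : Inst σ β) (φ : α → β) : ℕ → C.Addr → (R : σ.Rel) → Fin (σ.ar R) → C.Coord →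
    (Fin (σ.ar R) → β) → Prop
  | 0, _, _, _, _, _ => True
  | m + 1, A, R, b, x, t => C.FactAnchored (m + 1) A R b x →
    (∀ A₀ b₀ x₀, C.IsParentNode A₀ b₀ x₀ A b x → FactSim M φ m A₀ R b₀ x₀ t) ∧
    ∀ i, C.PointsToElem A R b x i → ElemSim M φ m (C.elemAt A R x i) (t i)

end

end Pointers

variable {C : Seed σ α} {A A₀ : C.Addr} {R : σ.Rel} {b b₀ i j : Fin (σ.ar R)} {c p q : σ.Pos}
  {x x₀ : C.Coord} {v : C.Elem} {m k : ℕ} {M : Inst σ β} {φ : α → β} {t : Fin (σ.ar R) → β} {u : β}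

theorem PointsToFact.unique (hp : C.PointsToFact A c x p) (hq : C.PointsToFact A c x q) :
    p = q :=
  (List.cons.inj (hp.2.symm.trans hq.2)).1

theorem PointsToElem.unique (hi : C.PointsToElem A R b x i) (hj : C.PointsToElem A R b x j) :
    i = j :=
  eq_of_heq (Sigma.mk.inj (List.cons.inj (hi.2.symm.trans hj.2)).1).2

theorem IsParentNode.not_pointsToElem (hx : C.IsParentNode A₀ b₀ x₀ A b x) :
    ¬ C.PointsToElem A R b x i := by
  rintro ⟨-, hword⟩
  simp [hx.2] at hword

theorem IsParentNode.unique {A₁ : C.Addr} {b₁ : Fin (σ.ar R)} {x₁ : C.Coord}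
    (h : C.IsParentNode A₀ b₀ x₀ A b x) (h' : C.IsParentNode A₁ b₁ x₁ A b x) :
    A₀ = A₁ ∧ b₀ = b₁ ∧ x₀ = x₁ := by
  have heq := h.1.symm.trans h'.1
  simp only [child.injEq, heq_eq_eq, true_and, and_true] at heq
  exact heq

theorem elemNeeds_elemOf (hA : C.ValidAddr A) : C.ElemNeeds (C.elemOf A c x) c := by
  by_cases hx : ∃ v, C.IsForeign A c x v
  · obtain ⟨v, hv⟩ := hx
    rw [hv.elemOf_eq]
    cases hv with
    | seed hneeds => exact hneeds
    | imported => exact hA.2.incl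
  · rw [elemOf_of_not_isForeign hx]
    exact C.deps.incl_refl c

/-! #### Dependence on the number of steps -/

theorem anchored_succ (m : ℕ) : (∀ v : C.Elem, C.ElemAnchored m v → C.ElemAnchored (m + 1) v) ∧
    ∀ A R b x, C.FactAnchored m A R b x → C.FactAnchored (m + 1) A R b x := by
  induction m with
  | zero => exact ⟨fun v h => by simp [ElemAnchored] at h,
      fun A R b x h => by simp [FactAnchored] at h⟩
  | succ m ih =>
    constructor
    · rintro (a | ⟨A, c, x⟩) h
      · trivial
      · obtain ⟨p, hp, h⟩ := h
        exact ⟨p, hp, ih.2 _ _ _ _ h⟩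
    · rintro A R b x (⟨A₀, b₀, x₀, hx, h⟩ | ⟨i, hi, h⟩)
      · exact Or.inl ⟨A₀, b₀, x₀, hx, ih.2 _ _ _ _ h⟩
      · exact Or.inr ⟨i, hi, h.imp id (ih.1 _)⟩

theorem ElemSim.compatible (h : C.ElemSim M φ m v u) : C.Compatible M v u := by
  cases m with
  | zero => exact h
  | succ m =>
    rcases v with a | ⟨A, c, x⟩
    · exact h.1
    · exact h.1

theorem sim_of_succ (m : ℕ) :
    (∀ v u, C.ElemSim M φ (m + 1) v u → C.ElemSim M φ m v u) ∧
    ∀ A R b x t, C.FactSim M φ (m + 1) A R b x t → C.FactSim M φ m A R b x t := by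
  induction m with
  | zero => exact ⟨fun _ _ h => h.compatible, fun _ _ _ _ _ _ => trivial⟩
  | succ m ih =>
    constructor
    · rintro (a | ⟨A, c, x⟩) u h
      · exact h
      · refine ⟨h.1, fun hanch p hp => ?_⟩
        obtain ⟨t, ht, htp, hsim⟩ := h.2 ((anchored_succ _).1 _ hanch) p hp
        exact ⟨t, ht, htp, ih.2 _ _ _ _ _ hsim⟩
    · intro A R b x t h hanch
      obtain ⟨hparent, helem⟩ := h ((anchored_succ _).2 _ _ _ _ hanch)
      exact ⟨fun A₀ b₀ x₀ hx => ih.2 _ _ _ _ _ (hparent A₀ b₀ x₀ hx),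
        fun i hi => ih.1 _ _ (helem i hi)⟩

theorem ElemSim.of_succ (h : C.ElemSim M φ (m + 1) v u) : C.ElemSim M φ m v u :=
  (sim_of_succ m).1 v u h

theorem FactSim.of_succ (h : C.FactSim M φ (m + 1) A R b x t) : C.FactSim M φ m A R b x t :=
  (sim_of_succ m).2 A R b x t h

theorem elemSim_of_not_anchored (h : ¬ C.ElemAnchored m v) (hv : C.Compatible M v u) :
    C.ElemSim M φ m v u := by
  cases m with
  | zero => exact hv
  | succ m =>
    rcases v with a | ⟨A, c, x⟩
    · exact absurd trivial h
    · exact ⟨hv, fun hanch => absurd hanch h⟩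

theorem factSim_of_not_anchored (h : ¬ C.FactAnchored m A R b x) :
    C.FactSim M φ m A R b x t := by
  cases m with
  | zero => trivial
  | succ m => exact fun hanch => absurd hanch h

theorem elemSim_succ_of_pointsToFact (hu : C.Compatible M (.inr (A, c, x)) (t i))
    (hi : C.PointsToFact A c x ⟨R, i⟩) (ht : (⟨R, t⟩ : Fact σ β) ∈ M)
    (hsim : C.FactSim M φ m A R (C.deps.blockRep i) ((C.shift A ⟨R, i⟩).symm x) t) :
    C.ElemSim M φ (m + 1) (.inr (A, c, x)) (t i) := by
  refine ⟨hu, fun _ p hp => ?_⟩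
  obtain rfl := hi.unique hp
  exact ⟨t, ht, rfl, hsim⟩

theorem factSim_succ_of_parent (hx : C.IsParentNode A₀ b₀ x₀ A b x)
    (hsim : C.FactSim M φ m A₀ R b₀ x₀ t) : C.FactSim M φ (m + 1) A R b x t := by
  refine fun _ => ⟨fun A₁ b₁ x₁ hx' => ?_, fun i hi => absurd hi hx.not_pointsToElem⟩
  obtain ⟨rfl, rfl, rfl⟩ := hx.unique hx'
  exact hsim

theorem factSim_succ_of_pointsToElem (hi : C.PointsToElem A R b x i)
    (hsim : C.ElemSim M φ m (C.elemAt A R x i) (t i)) : C.FactSim M φ (m + 1) A R b x t := by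
  refine fun _ => ⟨fun A₀ b₀ x₀ hx => absurd hi hx.not_pointsToElem, fun j hj => ?_⟩
  obtain rfl := hi.unique hj
  exact hsim

theorem FactSim.of_parent (hx : C.IsParentNode A₀ b₀ x₀ A b x)
    (hsim : C.FactSim M φ (m + 1) A R b x t) : C.FactSim M φ m A₀ R b₀ x₀ t := by
  by_cases hanch : C.FactAnchored m A₀ R b₀ x₀
  · exact (hsim (Or.inl ⟨A₀, b₀, x₀, hx, hanch⟩)).1 A₀ b₀ x₀ hx
  · exact factSim_of_not_anchored hanch

theorem anchored_length_le (m : ℕ) :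
    (∀ A c x, C.ElemAnchored m (.inr (A, c, x)) → x.2.1.length ≤ m) ∧
    ∀ A R b x, C.FactAnchored m A R b x → x.2.1.length ≤ m := by
  induction m with
  | zero => exact ⟨fun A c x h => by simp [ElemAnchored] at h,
      fun A R b x h => by simp [FactAnchored] at h⟩
  | succ m ih =>
    constructor
    · rintro A c x ⟨p, hp, h⟩
      rw [hp.2]
      exact Nat.succ_le_succ (ih.2 _ _ _ _ h)
    · rintro A R b x (⟨A₀, b₀, x₀, hx, -⟩ | ⟨i, hi, h⟩)
      · simp [hx.2]
      · rw [hi.2]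
        refine Nat.succ_le_succ ?_
        by_cases hforeign : ∃ v, C.IsForeign A (C.deps.posRep ⟨R, i⟩) (C.shift A ⟨R, i⟩ x) v
        · obtain ⟨v, hv⟩ := hforeign
          simp [hv.coord_snd]
        · have helem := h.resolve_left hforeign
          rw [elemAt, elemOf_of_not_isForeign hforeign] at helem
          exact ih.1 _ _ _ helem

/-! #### Invariance under truncation -/

/-- Truncate the address of an element. -/
def truncateElem (k : ℕ) : C.Elem → C.Elem
  | .inl a => .inl a
  | .inr (A, c, x) => .inr (truncate k A, c, x)

theorem IsForeign.truncate (h : C.IsForeign A c x v) (k : ℕ) :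
    C.IsForeign (truncate k A) c x (truncateElem k v) := by
  cases h with
  | seed hneeds => cases k <;> exact .seed hneeds
  | imported A₀ c₀ x₀ c => cases k <;> exact .imported _ _ _ _

theorem exists_isForeign_truncate_iff :
    (∃ v, C.IsForeign (truncate k A) c x v) ↔ ∃ v, C.IsForeign A c x v := by
  refine ⟨fun ⟨v, hv⟩ => ?_, fun ⟨v, hv⟩ => ⟨_, hv.truncate k⟩⟩
  cases A with
  | root => exact ⟨v, hv⟩
  | generic => exact ⟨v, hv⟩
  | imported A c' x' c'' =>
    rw [Address.truncate] at hv
    cases hv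
    exact ⟨_, .imported _ _ _ _⟩
  | child A R b x' b' => cases k <;> nomatch hv

theorem elemAt_truncate : C.elemAt (truncate k A) R x j = truncateElem k (C.elemAt A R x j) := by
  rw [elemAt, elemAt, shift_truncate]
  generalize C.deps.posRep ⟨R, j⟩ = c, C.shift A ⟨R, j⟩ x = y
  by_cases hy : ∃ v, C.IsForeign A c y v
  · obtain ⟨v, hv⟩ := hy
    rw [hv.elemOf_eq, (hv.truncate k).elemOf_eq]
  · rw [elemOf_of_not_isForeign hy,
      elemOf_of_not_isForeign (exists_isForeign_truncate_iff.not.2 hy)]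
    rfl

theorem pointsToFact_truncate_iff :
    C.PointsToFact (truncate k A) c x p ↔ C.PointsToFact A c x p := by
  simp only [PointsToFact, shift_truncate]

theorem pointsToElem_truncate_iff :
    C.PointsToElem (truncate k A) R b x i ↔ C.PointsToElem A R b x i := by
  simp only [PointsToElem, shift_truncate]

theorem isParentNode_truncate_iff : C.IsParentNode A₀ b₀ x₀ (truncate (k + 1) A) b x ↔
    ∃ A₁, C.IsParentNode A₁ b₀ x₀ A b x ∧ A₀ = truncate k A₁ := by
  simp only [IsParentNode, truncate_eq_child_iff]
  tauto

theorem anchored_truncate_iff (m : ℕ) : ∀ k, m ≤ k →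
    (∀ v : C.Elem, C.ElemAnchored m (truncateElem k v) ↔ C.ElemAnchored m v) ∧
    ∀ A R b x, C.FactAnchored m (truncate k A) R b x ↔ C.FactAnchored m A R b x := by
  induction m with
  | zero => exact fun k _ => ⟨fun _ => by simp [ElemAnchored],
      fun _ _ _ _ => by simp [FactAnchored]⟩
  | succ m ih =>
    intro k hk
    obtain ⟨k, rfl⟩ := Nat.exists_eq_add_one_of_ne_zero (Nat.ne_zero_of_lt hk)
    constructor
    · rintro (a | ⟨A, c, x⟩)
      · rfl
      · simp only [truncateElem, ElemAnchored, pointsToFact_truncate_iff, shift_truncate,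
          (ih (k + 1) (by omega)).2]
    · intro A R b x
      simp only [FactAnchored, pointsToElem_truncate_iff, shift_truncate,
        exists_isForeign_truncate_iff, elemAt_truncate, (ih (k + 1) (by omega)).1,
        isParentNode_truncate_iff]
      refine or_congr ⟨?_, ?_⟩ Iff.rfl
      · rintro ⟨A₀, b₀, x₀, ⟨A₁, hx, rfl⟩, h⟩
        exact ⟨A₁, b₀, x₀, hx, ((ih k (by omega)).2 _ _ _ _).1 h⟩
      · rintro ⟨A₁, b₀, x₀, hx, h⟩
        exact ⟨_, b₀, x₀, ⟨A₁, hx, rfl⟩, ((ih k (by omega)).2 _ _ _ _).2 h⟩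

theorem compatible_truncateElem_iff :
    C.Compatible M (truncateElem k v) u ↔ C.Compatible M v u := by
  rcases v with a | ⟨A, c, x⟩ <;> rfl

theorem sim_truncate_iff (m : ℕ) : ∀ k, m ≤ k →
    (∀ v u, C.ElemSim M φ m (truncateElem k v) u ↔ C.ElemSim M φ m v u) ∧
    ∀ A R b x t, C.FactSim M φ m (truncate k A) R b x t ↔ C.FactSim M φ m A R b x t := by
  induction m with
  | zero => exact fun k _ => ⟨fun v u => by simp [ElemSim, compatible_truncateElem_iff],
      fun _ _ _ _ _ => by simp [FactSim]⟩
  | succ m ih =>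
    intro k hk
    obtain ⟨k, rfl⟩ := Nat.exists_eq_add_one_of_ne_zero (Nat.ne_zero_of_lt hk)
    constructor
    · rintro (a | ⟨A, c, x⟩) u
      · rfl
      · have hanch := (anchored_truncate_iff (m + 1) (k + 1) hk).1 (.inr (A, c, x) : C.Elem)
        have hcompat := compatible_truncateElem_iff (M := M) (k := k + 1)
          (v := (.inr (A, c, x) : C.Elem)) (u := u)
        simp only [truncateElem] at hanch hcompat
        simp only [truncateElem, ElemSim, pointsToFact_truncate_iff, shift_truncate,
          (ih (k + 1) (by omega)).2, hanch, hcompat]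
    · intro A R b x t
      simp only [FactSim, pointsToElem_truncate_iff, elemAt_truncate, (ih (k + 1) (by omega)).1,
        (anchored_truncate_iff (m + 1) (k + 1) hk).2 A R b x, isParentNode_truncate_iff]
      refine imp_congr Iff.rfl (and_congr ⟨?_, ?_⟩ Iff.rfl)
      · intro h A₁ b₀ x₀ hx
        exact ((ih k (by omega)).2 _ _ _ _ _).1 (h _ b₀ x₀ ⟨A₁, hx, rfl⟩)
      · rintro h A₀ b₀ x₀ ⟨A₁, hx, rfl⟩
        exact ((ih k (by omega)).2 _ _ _ _ _).2 (h _ b₀ x₀ hx)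

end Seed

namespace Seed

open Address ReducedWord

variable {C : Seed σ α} {A A₀ : C.Addr} {R : σ.Rel} {b b₀ i j : Fin (σ.ar R)} {c p q : σ.Pos}
  {x x₀ : C.Coord} {v : C.Elem} {m k : ℕ} {M : Inst σ β} {φ : α → β} {t : Fin (σ.ar R) → β} {u : β}

/-! #### Existence of simulating elements and facts -/

theorem Reachable.exists_occursAt (hM : C.deps.IsModelOf C.inst M φ) (h : C.Reachable p) :
    ∃ u, occursAt M p u := by
  induction h with
  | seed h => exact ⟨_, hM.hom.occursAt h⟩
  | incl hincl _ ih =>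
    obtain ⟨u, hu⟩ := ih
    exact ⟨u, hM.incl hincl u hu⟩
  | rel j _ ih =>
    obtain ⟨u, t, ht, -⟩ := ih
    exact ⟨t j, occursAt_of_mem ht j⟩

theorem compatible_inr (hM : C.deps.IsModelOf C.inst M φ) (hu : occursAt M c u) :
    C.Compatible M (.inr (A, c, x)) u :=
  fun _ hq => hM.incl hq u hu

theorem compatible_inl (hM : C.deps.IsModelOf C.inst M φ) (a : α) :
    C.Compatible M (.inl a) (φ a) := by
  rintro q ⟨p, hp, hincl⟩
  exact hM.incl hincl _ (hM.hom.occursAt hp)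

theorem elemSim_inl (hM : C.deps.IsModelOf C.inst M φ) (m : ℕ) (a : α) :
    C.ElemSim M φ m (.inl a) (φ a) := by
  cases m with
  | zero => exact compatible_inl hM a
  | succ m => exact ⟨compatible_inl hM a, rfl⟩

theorem exists_mem_of_compatible_elemAt (hM : C.deps.IsModelOf C.inst M φ)
    (hA : C.ValidAddr A) (hu : C.Compatible M (C.elemAt A R x j) u) :
    ∃ t, (⟨R, t⟩ : Fact σ β) ∈ M ∧ t j = u :=
  hM.incl RankedDeps.posRep_incl u (hu _ (elemNeeds_elemOf hA))

theorem exists_elemSim_of_not_anchored (hM : C.deps.IsModelOf C.inst M φ) (hv : C.ValidElem v)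
    (h : ¬ C.ElemAnchored m v) : ∃ u, C.ElemSim M φ m v u := by
  rcases v with a | ⟨A, c, x⟩
  · exact ⟨φ a, elemSim_inl hM m a⟩
  · obtain ⟨u, hu⟩ := hv.1.reachable.exists_occursAt hM
    exact ⟨u, elemSim_of_not_anchored h (compatible_inr hM hu)⟩

theorem exists_factSim_of_not_anchored (hM : C.deps.IsModelOf C.inst M φ)
    (hA : C.ValidAt A ⟨R, b⟩) (h : ¬ C.FactAnchored m A R b x) :
    ∃ t, (⟨R, t⟩ : Fact σ β) ∈ M ∧ C.FactSim M φ m A R b x t := by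
  obtain ⟨u, t, ht, -⟩ := hA.reachable.exists_occursAt hM
  exact ⟨t, ht, factSim_of_not_anchored h⟩

theorem exists_elemSim_succ (hM : C.deps.IsModelOf C.inst M φ)
    (ih : ∀ A R b x, C.ValidAt A ⟨R, b⟩ →
      ∃ t, (⟨R, t⟩ : Fact σ β) ∈ M ∧ C.FactSim M φ m A R b x t)
    (hv : C.ValidElem v) : ∃ u, C.ElemSim M φ (m + 1) v u := by
  by_cases hanch : C.ElemAnchored (m + 1) v
  · rcases v with a | ⟨A, c, x⟩
    · exact ⟨φ a, elemSim_inl hM _ a⟩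
    · obtain ⟨⟨R, i⟩, ⟨rfl, hword⟩, -⟩ := hanch
      obtain ⟨t, ht, hsim⟩ := ih A R (C.deps.blockRep i) ((C.shift A ⟨R, i⟩).symm x)
        hv.1.of_posRep.blockRep
      have hocc : occursAt M (C.deps.posRep ⟨R, i⟩) (t i) :=
        hM.incl RankedDeps.incl_posRep _ (occursAt_of_mem ht i)
      exact ⟨t i, elemSim_succ_of_pointsToFact (compatible_inr hM hocc) ⟨rfl, hword⟩ ht hsim⟩
  · exact exists_elemSim_of_not_anchored hM hv hanch

theorem exists_factSim_succ (hM : C.deps.IsModelOf C.inst M φ)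
    (ihelem : ∀ v, C.ValidElem v → ∃ u, C.ElemSim M φ m v u)
    (ihfact : ∀ A R b x, C.ValidAt A ⟨R, b⟩ →
      ∃ t, (⟨R, t⟩ : Fact σ β) ∈ M ∧ C.FactSim M φ m A R b x t)
    (hA : C.ValidAt A ⟨R, b⟩) :
    ∃ t, (⟨R, t⟩ : Fact σ β) ∈ M ∧ C.FactSim M φ (m + 1) A R b x t := by
  by_cases hanch : C.FactAnchored (m + 1) A R b x
  · rcases hanch with ⟨A₀, b₀, x₀, hx, -⟩ | ⟨i, hi, -⟩
    · obtain ⟨rfl, rfl⟩ := id hx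
      obtain ⟨hA₀, hhost, -⟩ := hA.addr
      obtain ⟨t, ht, hsim⟩ := ihfact A₀ R b₀ x₀
        ⟨hA₀, Nat.le_of_succ_le hA.depth, hhost.rankFits, hhost.reachable⟩
      exact ⟨t, ht, factSim_succ_of_parent hx hsim⟩
    · obtain rfl := id hi.1
      obtain ⟨u, hu⟩ := ihelem (C.elemAt A R x i)
        (validElem_elemOf hA.of_blockRep.posRep RankedDeps.posRep_posRep)
      obtain ⟨t, ht, rfl⟩ := exists_mem_of_compatible_elemAt hM hA.addr hu.compatible
      exact ⟨t, ht, factSim_succ_of_pointsToElem hi hu⟩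
  · exact exists_factSim_of_not_anchored hM hA hanch

theorem exists_sim (hM : C.deps.IsModelOf C.inst M φ) (m : ℕ) :
    (∀ v, C.ValidElem v → ∃ u, C.ElemSim M φ m v u) ∧
    ∀ A R b x, C.ValidAt A ⟨R, b⟩ →
      ∃ t, (⟨R, t⟩ : Fact σ β) ∈ M ∧ C.FactSim M φ m A R b x t := by
  induction m with
  | zero => exact ⟨fun v hv => exists_elemSim_of_not_anchored hM hv (by simp [ElemAnchored]),
      fun A R b x hA => exists_factSim_of_not_anchored hM hA (by simp [FactAnchored])⟩
  | succ m ih => exact ⟨fun v hv => exists_elemSim_succ hM ih.2 hv,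
      fun A R b x hA => exists_factSim_succ hM ih.1 ih.2 hA⟩

/-! #### Passing between a fact and its elements -/

theorem shift_cases (A : C.Addr) (p : σ.Pos) (x : C.Coord) :
    x.2.1 = p :: (C.shift A p x).2.1 ∨ (C.shift A p x).2.1 = p :: x.2.1 ∨
      (C.shift A p x).2 = x.2 ∧ (C.radius + 1 ≤ x.2.1.length ∨
        (A = root ∧ occursAt C.inst ⟨p.1, C.deps.blockRep p.2⟩ x.1) ∧
          (x.2.1 = [] ∨ x.2.1 = [p])) := by
  by_cases hseed : A = root ∧ occursAt C.inst ⟨p.1, C.deps.blockRep p.2⟩ x.1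
  · have hshift : (C.shift A p x).2 = cut p x.2 := by simp [shift, hseed]
    rw [hshift]
    rcases cut_cases p x.2 with ⟨hcut, hword⟩ | hcut
    · exact Or.inr (Or.inr ⟨hcut, Or.inr ⟨hseed, hword⟩⟩)
    · rw [hcut]
      exact (toggle_cases p x.2).imp_right (Or.imp_right fun h => ⟨h.1, Or.inl h.2⟩)
  · have hshift : (C.shift A p x).2 = toggle p x.2 := by simp [shift, hseed]
    rw [hshift]
    exact (toggle_cases p x.2).imp_right (Or.imp_right fun h => ⟨h.1, Or.inl h.2⟩)

theorem elemAt_of_shift_ne_nil (h : (C.shift A ⟨R, j⟩ x).2 ≠ nil) :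
    C.elemAt A R x j = .inr (A, C.deps.posRep ⟨R, j⟩, C.shift A ⟨R, j⟩ x) :=
  elemOf_of_not_isForeign fun ⟨_, hv⟩ => h hv.coord_snd

variable (C) in
/-- Neither the fact with the block of `j` at coordinate `x` of `A` nor its element at `j` is
anchored within the radius. -/
def Unanchored (A : C.Addr) (R : σ.Rel) (x : C.Coord) (j : Fin (σ.ar R)) : Prop :=
  ∀ m ≤ C.radius, ¬ C.ElemAnchored m (C.elemAt A R x j) ∧
    ¬ C.FactAnchored m A R (C.deps.blockRep j) x

theorem unanchored_of_radius_lt (hshift : (C.shift A ⟨R, j⟩ x).2 = x.2)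
    (hword : C.radius + 1 ≤ x.2.1.length) : C.Unanchored A R x j := by
  refine fun m hm => ⟨fun h => ?_, fun h => ?_⟩
  · rw [elemAt_of_shift_ne_nil] at h
    · have := (anchored_length_le m).1 _ _ _ h
      rw [hshift] at this
      omega
    · rintro hnil
      rw [← hshift, hnil] at hword
      simp at hword
  · have := (anchored_length_le m).2 _ _ _ _ h
    omega

theorem unanchored_of_cut {x : C.Coord} (hshift : (C.shift root ⟨R, j⟩ x).2 = x.2)
    (hword : x.2.1 = [⟨R, j⟩]) : C.Unanchored root R x j := by
  -- The passage through `j` is cut at the seed, so that the single letter points nowhere.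
  refine fun m _ => ⟨fun h => ?_, fun h => ?_⟩
  · rw [elemAt_of_shift_ne_nil fun hnil => by simp [← hshift, hnil] at hword] at h
    cases m with
    | zero => simp [ElemAnchored] at h
    | succ m =>
      obtain ⟨p, ⟨-, hp⟩, -⟩ := h
      rw [hshift, hword, List.cons.injEq] at hp
      obtain ⟨rfl, hp⟩ := hp
      simp [hword] at hp
  · cases m with
    | zero => simp [FactAnchored] at h
    | succ m =>
      rcases h with ⟨A₀, b₀, x₀, hx, -⟩ | ⟨i, ⟨-, hi⟩, -⟩
      · nomatch hx.1
      · rw [hword, List.cons.injEq, Sigma.mk.injEq] at hi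
        obtain ⟨⟨-, hij⟩, hi⟩ := hi
        obtain rfl := eq_of_heq hij
        simp [hshift, hword] at hi

theorem pointer_cases (hx : ¬ C.IsSeedNode A R (C.deps.blockRep j) x) :
    C.PointsToElem A R (C.deps.blockRep j) x j ∨
      C.elemAt A R x j = .inr (A, C.deps.posRep ⟨R, j⟩, C.shift A ⟨R, j⟩ x) ∧
        (C.PointsToFact A (C.deps.posRep ⟨R, j⟩) (C.shift A ⟨R, j⟩ x) ⟨R, j⟩ ∨
          C.Unanchored A R x j) := by
  rcases shift_cases A ⟨R, j⟩ x with h | h | ⟨h, hlen | ⟨⟨rfl, hocc⟩, hnil | hword⟩⟩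
  · exact Or.inl ⟨rfl, h⟩
  · refine Or.inr ⟨elemAt_of_shift_ne_nil fun hnil => by simp [hnil] at h, Or.inl ⟨rfl, ?_⟩⟩
    rwa [Equiv.symm_apply_apply]
  · refine Or.inr ⟨elemAt_of_shift_ne_nil fun hnil => ?_, Or.inr (unanchored_of_radius_lt h hlen)⟩
    rw [← h, hnil] at hlen
    simp at hlen
  · exact absurd ⟨rfl, Subtype.ext hnil, hocc⟩ hx
  · refine Or.inr ⟨elemAt_of_shift_ne_nil fun hnil => ?_, Or.inr (unanchored_of_cut h hword)⟩
    simp [← h, hnil] at hword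

theorem ElemSim.exists_factSim (hM : C.deps.IsModelOf C.inst M φ)
    (hx : ¬ C.IsSeedNode A R (C.deps.blockRep j) x) (hA : C.ValidAddr A) (hm : m ≤ C.radius)
    (hu : C.ElemSim M φ (m + 1) (C.elemAt A R x j) u) :
    ∃ t, (⟨R, t⟩ : Fact σ β) ∈ M ∧ t j = u ∧ C.FactSim M φ m A R (C.deps.blockRep j) x t := by
  obtain ⟨t, ht, htj⟩ := exists_mem_of_compatible_elemAt hM hA hu.compatible
  by_cases hanch : C.FactAnchored m A R (C.deps.blockRep j) x
  · rcases pointer_cases hx with hj | ⟨helem, hj | hj⟩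
    · refine ⟨t, ht, htj, FactSim.of_succ (factSim_succ_of_pointsToElem hj ?_)⟩
      rw [htj]
      exact hu.of_succ
    · rw [helem] at hu
      obtain ⟨t, ht, htj, hsim⟩ :=
        hu.2 ⟨_, hj, by rwa [Equiv.symm_apply_apply]⟩ _ hj
      rw [Equiv.symm_apply_apply] at hsim
      exact ⟨t, ht, htj, hsim⟩
    · exact absurd hanch (hj m hm).2
  · exact ⟨t, ht, htj, factSim_of_not_anchored hanch⟩

theorem FactSim.elemSim (hM : C.deps.IsModelOf C.inst M φ)
    (hx : ¬ C.IsSeedNode A R (C.deps.blockRep j) x) (hm : m ≤ C.radius)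
    (ht : (⟨R, t⟩ : Fact σ β) ∈ M)
    (hsim : C.FactSim M φ (m + 1) A R (C.deps.blockRep j) x t) :
    C.ElemSim M φ m (C.elemAt A R x j) (t j) := by
  have hcompat : C.Compatible M (.inr (A, C.deps.posRep ⟨R, j⟩, C.shift A ⟨R, j⟩ x)) (t j) :=
    compatible_inr hM (hM.incl RankedDeps.incl_posRep _ (occursAt_of_mem ht j))
  rcases pointer_cases hx with hj | ⟨helem, hj | hj⟩
  · by_cases hanch : C.FactAnchored (m + 1) A R (C.deps.blockRep j) x
    · exact (hsim hanch).2 j hj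
    · have hforeign : ¬ ∃ v, C.IsForeign A (C.deps.posRep ⟨R, j⟩) (C.shift A ⟨R, j⟩ x) v :=
        fun hv => hanch (Or.inr ⟨j, hj, Or.inl hv⟩)
      refine elemSim_of_not_anchored (fun h => hanch (Or.inr ⟨j, hj, Or.inr h⟩)) ?_
      rwa [elemAt, elemOf_of_not_isForeign hforeign]
  · rw [helem]
    refine ElemSim.of_succ (elemSim_succ_of_pointsToFact hcompat hj ht ?_)
    rw [Equiv.symm_apply_apply]
    exact hsim.of_succ
  · exact elemSim_of_not_anchored (hj m hm).1 (helem ▸ hcompat)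

theorem not_isSeedNode_child {R' : σ.Rel} {b' : Fin (σ.ar R')} :
    ¬ C.IsSeedNode (child A R b x b₀) R' b' x₀ :=
  fun h => nomatch h.1

theorem exists_factSim_of_elemSim_createdFact (hM : C.deps.IsModelOf C.inst M φ)
    (hm : m + 2 ≤ C.radius) (hA : C.ValidAt A ⟨R, b⟩) (hx : C.Hosts A R b x)
    (hu : C.ElemSim M φ (m + 3) (C.createdFact A R b x j) u) :
    ∃ t, (⟨R, t⟩ : Fact σ β) ∈ M ∧ t j = u ∧ C.FactSim M φ (m + 1) A R b x t := by
  by_cases hj : C.deps.blockRep j = b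
  · subst hj
    rw [createdFact_of_eq rfl] at hu
    obtain ⟨t, ht, htj, hsim⟩ :=
      hu.exists_factSim hM (fun h => hx.not_reserved (Or.inl h)) hA.addr hm
    exact ⟨t, ht, htj, hsim.of_succ⟩
  · rw [createdFact_of_ne hj] at hu
    obtain ⟨t, ht, htj, hsim⟩ :=
      hu.exists_factSim hM not_isSeedNode_child (hA.child hx hj).addr hm
    refine ⟨t, ht, htj, ?_⟩
    rw [← (sim_truncate_iff (m + 1) C.radius (by omega)).2]
    exact hsim.of_parent ⟨rfl, rfl⟩

theorem FactSim.elemSim_createdFact (hM : C.deps.IsModelOf C.inst M φ)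
    (hm : m ≤ C.radius) (hx : C.Hosts A R b x) (ht : (⟨R, t⟩ : Fact σ β) ∈ M)
    (hsim : C.FactSim M φ (m + 1) A R b x t) (i : Fin (σ.ar R)) :
    C.ElemSim M φ m (C.createdFact A R b x i) (t i) := by
  by_cases hi : C.deps.blockRep i = b
  · subst hi
    rw [createdFact_of_eq rfl]
    exact hsim.elemSim hM (fun h => hx.not_reserved (Or.inl h)) hm ht
  · rw [createdFact_of_ne hi]
    refine FactSim.elemSim hM not_isSeedNode_child hm ht
      (factSim_succ_of_parent ⟨rfl, rfl⟩ ?_)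
    rw [(sim_truncate_iff m C.radius hm).2]
    exact hsim.of_succ

theorem exists_mem_elemSim (hM : C.deps.IsModelOf C.inst M φ) (hm : m + 3 ≤ C.radius)
    {F : Fin (σ.ar R) → C.Elem} (hF : (⟨R, F⟩ : Fact σ C.Elem) ∈ C.baseInst)
    (hu : C.ElemSim M φ (m + 3) (F j) u) :
    ∃ t, (⟨R, t⟩ : Fact σ β) ∈ M ∧ t j = u ∧ ∀ i, C.ElemSim M φ m (F i) (t i) := by
  rcases mem_baseInst_cases hF with ⟨s, hs, rfl⟩ | ⟨A, b, x, hA, hx, rfl⟩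
  · exact ⟨_, hM.hom hs, hu.2.symm, fun i => elemSim_inl hM m _⟩
  · obtain ⟨t, ht, htj, hsim⟩ :=
      exists_factSim_of_elemSim_createdFact hM (by omega) hA hx hu
    exact ⟨t, ht, htj, hsim.elemSim_createdFact hM (by omega) hx ht⟩

end Seed

/-- A family of approximations to a homomorphism from `J` to `M` extending the interpretation `φ`
of the elements `e a`: to `n` steps, every fact of `J` can be followed in `M` from any of its
elements. -/
structure Simulation (J : Inst σ α) {γ : Type} (e : γ → α) (M : Inst σ β) (φ : γ → β) (n : ℕ)
    (S : ℕ → α → β → Prop) : Prop where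
  of_succ : ∀ {m v u}, S (m + 1) v u → S m v u
  total : ∀ m v, ∃ u, S m v u
  step : ∀ {m : ℕ} {R : σ.Rel} {F : Fin (σ.ar R) → α} {j : Fin (σ.ar R)} {u : β}, m < n →
    (⟨R, F⟩ : Fact σ α) ∈ J → S (m + 1) (F j) u →
      ∃ t, (⟨R, t⟩ : Fact σ β) ∈ M ∧ t j = u ∧ ∀ i, S m (F i) (t i)
  seed : ∀ m a, S m (e a) (φ a)
  eq_of_seed : ∀ {m a u}, S (m + 1) (e a) u → u = φ a

/-- A finite model of the inclusions and of the functional dependencies within blocks that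
extends `I` and is simulated to `n` steps in every model of the inclusions over `I`. -/
structure BaseModel (D : RankedDeps σ) (I : Inst σ α) (n : ℕ) where
  Elem : Type
  finite : Finite Elem
  inst : Inst σ Elem
  embed : α → Elem
  embed_injective : Function.Injective embed
  embed_hom : IsHom I inst embed
  includes : ∀ {p q}, D.incl p q → Includes inst p q
  determines : ∀ {R : σ.Rel} {i j : Fin (σ.ar R)}, D.blockRep j = D.blockRep i →
    Determines inst {i} j
  simulation : ∀ {M : Inst σ ℕ} {φ : α → ℕ}, D.IsModelOf I M φ →
    ∃ S, Simulation inst embed M φ n S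

attribute [instance] BaseModel.finite

section BaseModel

variable {D : RankedDeps σ} {I : Inst σ α}

theorem exists_perm_of_determines [Finite α] {R : σ.Rel} {i j : Fin (σ.ar R)}
    (hij : Determines I {i} j) (hji : Determines I {j} i) :
    ∃ π : Equiv.Perm α, ∀ t : Fin (σ.ar R) → α, (⟨R, t⟩ : Fact σ α) ∈ I → π (t i) = t j := by
  have hex : ∀ y : {y // occursAt I ⟨R, i⟩ y},
      ∃ t : Fin (σ.ar R) → α, (⟨R, t⟩ : Fact σ α) ∈ I ∧ t i = y := fun y => y.2
  choose tuple mem_tuple tuple_eq using hex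
  let f : {y // occursAt I ⟨R, i⟩ y} → {y // occursAt I ⟨R, j⟩ y} :=
    fun y => ⟨tuple y j, occursAt_of_mem (mem_tuple y) j⟩
  have hf : ∀ {t : Fin (σ.ar R) → α} (ht : (⟨R, t⟩ : Fact σ α) ∈ I),
      (f ⟨t i, occursAt_of_mem ht i⟩ : α) = t j :=
    fun ht => hij.of_occursAt (mem_tuple _) ht (tuple_eq _)
  have hbij : Function.Bijective f := by
    constructor
    · intro y z h
      have hi := hji.of_occursAt (mem_tuple y) (mem_tuple z) (congrArg Subtype.val h)
      rw [tuple_eq, tuple_eq] at hi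
      exact Subtype.ext hi
    · rintro ⟨_, t, ht, rfl⟩
      exact ⟨⟨t i, occursAt_of_mem ht i⟩, Subtype.ext (hf ht)⟩
  classical
  have := Fintype.ofFinite α
  refine ⟨(Equiv.ofBijective f hbij).extendSubtype, fun t ht => ?_⟩
  rw [Equiv.extendSubtype_apply_of_mem _ _ (occursAt_of_mem ht i)]
  exact hf ht

/-- The base model, with its elements restricted to those that are used. -/
def Seed.usedInst (C : Seed σ α) : Inst σ {v : C.Elem // C.ValidElem v} :=
  {F | (⟨F.1, fun i => (F.2 i).1⟩ : Fact σ C.Elem) ∈ C.baseInst}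

theorem Seed.occursAt_usedInst_iff {C : Seed σ α} {p : σ.Pos} {v : {v : C.Elem // C.ValidElem v}} :
    occursAt C.usedInst p v ↔ occursAt C.baseInst p v.1 := by
  constructor
  · rintro ⟨t, ht, rfl⟩
    exact ⟨_, ht, rfl⟩
  · rintro ⟨t, ht, hv⟩
    exact ⟨fun i => ⟨t i, validElem_of_occursAt (occursAt_of_mem ht i)⟩, ht, Subtype.ext hv⟩

theorem Seed.simulation_elemSim {C : Seed σ α} {M : Inst σ β} {φ : α → β} {n : ℕ}
    (hn : 3 * n ≤ C.radius) (hM : C.deps.IsModelOf C.inst M φ) :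
    Simulation C.usedInst (fun a => ⟨.inl a, trivial⟩) M φ n
      fun m v u => C.ElemSim M φ (3 * m) v.1 u where
  of_succ h := ElemSim.of_succ (ElemSim.of_succ (ElemSim.of_succ h))
  total m v := (exists_sim hM (3 * m)).1 v.1 v.2
  step hm hF hu := exists_mem_elemSim hM (by omega) hF hu
  seed m a := elemSim_inl hM (3 * m) a
  eq_of_seed h := h.2

theorem nonempty_baseModel [Finite α]
    (hI : ∀ {R : σ.Rel} {i j : Fin (σ.ar R)}, D.det i j → Determines I {i} j) (n : ℕ) :
    Nonempty (BaseModel D I n) := by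
  have hperm : ∀ p : σ.Pos, ∃ π : Equiv.Perm α, ∀ t : Fin (σ.ar p.1) → α,
      (⟨p.1, t⟩ : Fact σ α) ∈ I → π (t (D.blockRep p.2)) = t p.2 := fun _ =>
    exists_perm_of_determines (hI RankedDeps.blockRep_det) (hI RankedDeps.det_blockRep)
  choose perm perm_apply using hperm
  let C : Seed σ α := ⟨D, I, perm, fun ht j => perm_apply ⟨_, j⟩ _ ht, 3 * n⟩
  exact ⟨{
    Elem := {v : C.Elem // C.ValidElem v}
    finite := Seed.finite_setOf_validElem
    inst := C.usedInst
    embed := fun a => ⟨.inl a, trivial⟩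
    embed_injective := fun a b h => Sum.inl_injective (congrArg Subtype.val h)
    embed_hom := fun R t ht => Seed.mem_baseInst_of_seed ht
    includes := fun h v hv =>
      Seed.occursAt_usedInst_iff.2 (Seed.includes_baseInst h v.1 (Seed.occursAt_usedInst_iff.1 hv))
    determines := fun h F F' hF hF' heq => Subtype.ext <|
      Seed.determines_baseInst h _ _ hF hF' fun l hl => congrArg Subtype.val (heq l hl)
    simulation := fun hM => ⟨_, Seed.simulation_elemSim le_rfl hM⟩ }⟩

end BaseModel

/-! ### Patterns with gaps -/

/-- A colouring by `K` colours of some of the elements of `P` and, possibly, of one extra slot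
`none`. -/
abbrev Pattern (P : Type) (K : ℕ) : Type := Option P → Option (Fin K)

namespace Pattern

variable {P : Type} {K : ℕ}

/-- Some element of `P` is left uncoloured. -/
def HasGap (y : Pattern P K) : Prop := ∃ d, y (some d) = none

open Classical in
/-- A pattern with a gap, described by a gap and by the pattern in which the colour of the extra
slot has been moved there. -/
noncomputable def fillGap (y : Pattern P K) (hy : y.HasGap) : P × (P → Option (Fin K)) :=
  (hy.choose, fun i => if i = hy.choose then y none else y (some i))

theorem fillGap_injective {y y' : Pattern P K} {hy : y.HasGap} {hy' : y'.HasGap}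
    (h : y.fillGap hy = y'.fillGap hy') : y = y' := by
  obtain ⟨hgap, hfill⟩ := Prod.mk.injEq .. ▸ h
  have hy_gap := hy.choose_spec
  have hy'_gap := hy'.choose_spec
  rw [← hgap] at hy'_gap hfill
  funext d
  cases d with
  | none => simpa using congrFun hfill hy.choose
  | some i =>
    by_cases hi : i = hy.choose
    · rw [hi, hy_gap, hy'_gap]
    · simpa [hi] using congrFun hfill i

theorem mul_succ_pow_le_pow_succ {N s K : ℕ} (hK : K = N * s * 2 ^ s + 1) :
    N * (s * (K + 1) ^ s) ≤ K ^ (s + 1) :=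
  calc N * (s * (K + 1) ^ s) ≤ N * (s * (2 * K) ^ s) := by gcongr; omega
    _ = (N * s * 2 ^ s) * K ^ s := by rw [mul_pow]; ring
    _ ≤ K * K ^ s := by gcongr; omega
    _ = K ^ (s + 1) := by ring

-- For many colours the extra slot makes full patterns more numerous than patterns with a gap.
theorem exists_fullPattern_encoding (P X : Type) [Finite P] [Finite X] :
    ∃ (K : ℕ) (enc : X → Pattern P K → Pattern P K), (∀ x y d, enc x y d ≠ none) ∧
      ∀ {x x' y y'}, y.HasGap → y'.HasGap → enc x y = enc x' y' → x = x' ∧ y = y' := by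
  have := Fintype.ofFinite P
  have := Fintype.ofFinite X
  obtain ⟨K, hK⟩ : ∃ K, K = Fintype.card X * Fintype.card P * 2 ^ Fintype.card P + 1 := ⟨_, rfl⟩
  classical
  have hcard : Fintype.card (X × P × (P → Option (Fin K))) ≤ Fintype.card (Option P → Fin K) := by
    simpa only [Fintype.card_prod, Fintype.card_fun, Fintype.card_option, Fintype.card_fin] using
      mul_succ_pow_le_pow_succ hK
  obtain ⟨f⟩ := Function.Embedding.nonempty_of_card_le hcard
  refine ⟨K, fun x y => if hy : y.HasGap then fun d => some (f (x, y.fillGap hy) d)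
    else fun _ => some ⟨0, by omega⟩, fun x y d => ?_, fun {x x' y y'} hy hy' h => ?_⟩
  · dsimp only
    split_ifs <;> simp
  · simp only [dif_pos hy, dif_pos hy'] at h
    have hf : f (x, y.fillGap hy) = f (x', y'.fillGap hy') :=
      funext fun d => Option.some_injective _ (congrFun h d)
    obtain ⟨hx, hfill⟩ := Prod.mk.injEq .. ▸ f.injective hf
    exact ⟨hx, fillGap_injective hfill⟩

/-- The positions at which a pattern is erased when passing from block `p` to position `l` of a
fact: those determining `l` but not `p`. -/
def Masked (D : RankedDeps σ) {R : σ.Rel} (p l : Fin (σ.ar R)) (q : σ.Pos) : Prop :=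
  ∃ d, q = ⟨R, d⟩ ∧ ¬ D.det d p ∧ D.det d l

open Classical in
/-- Erase the pattern `y` at the masked positions. -/
noncomputable def mask (D : RankedDeps σ) {R : σ.Rel} (p l : Fin (σ.ar R)) (y : Pattern σ.Pos K) :
    Pattern σ.Pos K
  | none => y none
  | some q => if Masked D p l q then none else y (some q)

variable {D : RankedDeps σ} {R : σ.Rel} {p l l' r : Fin (σ.ar R)} {y y' : Pattern σ.Pos K}

theorem mask_mask : mask D p l (mask D p l y) = mask D p l y := by
  funext d
  cases d with
  | none => rfl
  | some q => simp only [mask]; split_ifs <;> rfl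

open Classical in
theorem mask_congr (h : D.blockRep l = D.blockRep l') : mask D p l y = mask D p l' y := by
  have hmasked : ∀ q, Masked D p l q ↔ Masked D p l' q := by
    refine fun q => ⟨?_, ?_⟩
    · rintro ⟨d, hq, hp, hd⟩
      exact ⟨d, hq, hp, D.det_trans hd (RankedDeps.det_of_blockRep_eq h)⟩
    · rintro ⟨d, hq, hp, hd⟩
      exact ⟨d, hq, hp, D.det_trans hd (RankedDeps.det_of_blockRep_eq h.symm)⟩
  funext d
  cases d with
  | none => rfl
  | some q => exact if_congr (hmasked q) rfl rfl

theorem hasGap_mask (h : ¬ D.det l p) : (mask D p l y).HasGap :=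
  ⟨⟨R, l⟩, if_pos ⟨l, rfl, h, D.det_refl l⟩⟩

theorem mask_eq_mask_iff :
    mask D p l y = mask D p l y' ↔ ∀ x, y x ≠ y' x → ∃ q, x = some q ∧ Masked D p l q := by
  refine ⟨fun h x hx => ?_, fun h => funext fun x => ?_⟩
  · have hx' := congrFun h x
    cases x with
    | none => exact absurd hx' hx
    | some q =>
      refine ⟨q, rfl, by_contra fun hq => hx ?_⟩
      simpa only [mask, if_neg hq] using hx'
  · by_cases hx : y x = y' x
    · cases x with
      | none => exact hx
      | some q => simp only [mask, hx]
    · obtain ⟨q, rfl, hq⟩ := h x hx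
      simp only [mask, if_pos hq]

theorem masked_of_forall_masked {L : Set (Fin (σ.ar R))} {q : σ.Pos} (hL : L.Nonempty)
    (hr : ∀ d, (∀ l ∈ L, D.det d l) → D.det d r) (h : ∀ l ∈ L, Masked D p l q) :
    Masked D p r q := by
  obtain ⟨l, hl⟩ := hL
  obtain ⟨d, rfl, hp, -⟩ := h l hl
  refine ⟨d, rfl, hp, hr d fun l hl => ?_⟩
  obtain ⟨d', hd', -, hdet⟩ := h l hl
  obtain rfl : d = d' := by simpa using hd'
  exact hdet

theorem mask_eq_of_forall_mask_eq {L : Set (Fin (σ.ar R))} (hL : L.Nonempty)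
    (hr : ∀ d, (∀ l ∈ L, D.det d l) → D.det d r) (hne : y ≠ y')
    (h : ∀ l ∈ L, mask D p l y = mask D p l y') :
    mask D p r y = mask D p r y' ∧ ¬ D.det r p := by
  have hmasked : ∀ x, y x ≠ y' x → ∃ q, x = some q ∧ Masked D p r q := by
    intro x hx
    obtain ⟨l, hl⟩ := id hL
    obtain ⟨q, rfl, -⟩ := mask_eq_mask_iff.1 (h l hl) x hx
    refine ⟨q, rfl, masked_of_forall_masked hL hr fun l hl => ?_⟩
    obtain ⟨q', hq', hmasked⟩ := mask_eq_mask_iff.1 (h l hl) _ hx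
    exact Option.some_injective _ hq' ▸ hmasked
  refine ⟨mask_eq_mask_iff.2 hmasked, fun hdet => ?_⟩
  obtain ⟨x, hx⟩ := Function.ne_iff.1 hne
  obtain ⟨q, -, d, -, hp, hd⟩ := hmasked x hx
  exact hp (D.det_trans hd hdet)

end Pattern

/-! ### Tags -/

/-- Where the pattern of a tag comes from: nowhere, from the seed instance, or from the fact
with value `a` at the block representative `p`. -/
inductive Origin (σ : Sig) (V : Type)
  | blank
  | seed
  | fact (p : σ.Pos) (a : V)

/-- The label attached to an element of a base model. The trail records the facts that have been
traversed from a determined to a determining position since the pattern was last renewed. -/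
@[ext]
structure Tag (σ : Sig) (V : Type) (K : ℕ) where
  origin : Origin σ V
  pattern : Pattern σ.Pos K
  trail : List (σ.Pos × V)

/-- A number of colours, a bound on the ranks, and an encoding of tags into patterns that is
injective on the tags in use. -/
structure Tagging (D : RankedDeps σ) (V : Type) where
  colors : ℕ
  maxRank : ℕ
  rank_le : ∀ p, D.rank p ≤ maxRank
  encode : Tag σ V colors → Pattern σ.Pos colors
  encode_blank : ∀ y, encode ⟨.blank, y, []⟩ = y
  encode_inj : ∀ {t t'}, t.pattern.HasGap → t'.pattern.HasGap → t.trail.length ≤ maxRank →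
    t'.trail.length ≤ maxRank → encode t = encode t' → t = t'

section Tag

variable {V : Type} {K : ℕ}

instance [Finite V] : Finite (Origin σ V) := by
  let f : Origin σ V → Option (Option (σ.Pos × V))
    | .blank => none
    | .seed => some none
    | .fact p a => some (some (p, a))
  refine Finite.of_injective f ?_
  rintro (_ | _ | ⟨p, a⟩) (_ | _ | ⟨p', a'⟩) h <;> simp_all [f]

theorem finite_setOf_trail_length_le [Finite V] (N : ℕ) :
    {t : Tag σ V K | t.trail.length ≤ N}.Finite := by
  have hprod := (Set.finite_univ (α := Origin σ V × Pattern σ.Pos K)).prod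
    (List.finite_length_le (σ.Pos × V) N)
  exact (hprod.image fun z => ⟨z.1.1, z.1.2, z.2⟩).subset fun t ht =>
    ⟨((t.origin, t.pattern), t.trail), ⟨trivial, ht⟩, rfl⟩

open Classical in
theorem nonempty_tagging (D : RankedDeps σ) (V : Type) [Finite V] : Nonempty (Tagging D V) := by
  obtain ⟨N, hN⟩ : ∃ N, ∀ p, D.rank p ≤ N := by
    obtain ⟨N, hN⟩ := (Set.finite_range D.rank).bddAbove
    exact ⟨N, fun p => hN ⟨p, rfl⟩⟩
  have : Finite {l : List (σ.Pos × V) // l.length ≤ N} := (List.finite_length_le _ N).to_subtype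
  obtain ⟨K, enc, enc_full, enc_inj⟩ := Pattern.exists_fullPattern_encoding σ.Pos
    (Origin σ V × {l : List (σ.Pos × V) // l.length ≤ N})
  let encode (t : Tag σ V K) : Pattern σ.Pos K :=
    if t.origin = .blank ∧ t.trail = [] then t.pattern
    else if ht : t.trail.length ≤ N then enc (t.origin, ⟨t.trail, ht⟩) t.pattern else t.pattern
  refine ⟨⟨K, N, hN, encode, fun y => by simp [encode], ?_⟩⟩
  rintro ⟨o, y, l⟩ ⟨o', y', l'⟩ hy hy' hl hl' h
  simp only [encode, dif_pos hl, dif_pos hl'] at h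
  split_ifs at h with hblank hblank' hblank'
  · rw [hblank.1, hblank'.1, hblank.2, hblank'.2, h]
  · obtain ⟨d, hd⟩ := hy
    exact absurd (h ▸ hd) (enc_full _ _ _)
  · obtain ⟨d, hd⟩ := hy'
    exact absurd (h ▸ hd) (enc_full _ _ _)
  · simpa [and_assoc, and_comm, and_left_comm] using enc_inj hy hy' h

end Tag

/-! ### Enforcing the functional dependencies -/

section ChosenFact

variable {D : RankedDeps σ} {I : Inst σ α} {n : ℕ} {B : BaseModel D I n} {R : σ.Rel}
  {p i j : Fin (σ.ar R)} {a : B.Elem}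

open Classical in
/-- A fact of the base model with value `a` at `p`; junk if there is none. -/
noncomputable def chosenFact (B : BaseModel D I n) {R : σ.Rel} (p : Fin (σ.ar R)) (a : B.Elem) :
    Fin (σ.ar R) → B.Elem :=
  if h : occursAt B.inst ⟨R, p⟩ a then h.choose else fun _ => a

theorem chosenFact_mem (h : occursAt B.inst ⟨R, p⟩ a) :
    (⟨R, chosenFact B p a⟩ : Fact σ B.Elem) ∈ B.inst := by
  rw [chosenFact, dif_pos h]
  exact h.choose_spec.1

theorem chosenFact_apply_self (h : occursAt B.inst ⟨R, p⟩ a) : chosenFact B p a p = a := by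
  rw [chosenFact, dif_pos h]
  exact h.choose_spec.2

/-- `p` is a block representative and `a` occurs there in the base model. -/
structure IsBlockValue (B : BaseModel D I n) {R : σ.Rel} (p : Fin (σ.ar R)) (a : B.Elem) :
    Prop where
  blockRep_eq : D.blockRep p = p
  occursAt : occursAt B.inst ⟨R, p⟩ a

theorem BaseModel.eq_of_blockRep_eq (h : D.blockRep i = D.blockRep j) {t u : Fin (σ.ar R) → B.Elem}
    (ht : (⟨R, t⟩ : Fact σ B.Elem) ∈ B.inst) (hu : (⟨R, u⟩ : Fact σ B.Elem) ∈ B.inst)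
    (heq : t i = u i) : t j = u j :=
  (B.determines h.symm).of_occursAt ht hu heq

end ChosenFact

namespace Tagging

variable {D : RankedDeps σ} {I : Inst σ α} {n : ℕ} {B : BaseModel D I n} (T : Tagging D B.Elem)

/-- The elements of the tagged model: elements of the base model with a tag. -/
abbrev Elem : Type := B.Elem × Tag σ B.Elem T.colors

/-- The tag of the elements of the seed instance. -/
def seedTag : Tag σ B.Elem T.colors := ⟨.seed, fun _ => none, []⟩

/-- The element `a` at the block representative `p`, with a tag of the given origin, pattern and
trail, already occurs in a seed fact or in a fact generated from another block. -/
def Provided (B : BaseModel D I n) {K : ℕ} (origin : Origin σ B.Elem) (y : Pattern σ.Pos K) :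
    List (σ.Pos × B.Elem) → (R : σ.Rel) → Fin (σ.ar R) → B.Elem → Prop
  | [], R, p, a => match origin with
    | .blank => False
    | .seed => y = (fun _ => none) ∧ ∃ t, (⟨R, t⟩ : Fact σ α) ∈ I ∧ a = B.embed (t p)
    | .fact q a' => ∃ p', q = ⟨R, p'⟩ ∧ ¬ D.det p p' ∧ chosenFact B p' a' p = a ∧
        IsBlockValue B p' a' ∧ y.mask D p' p = y
  | (q, a') :: l, R, p, a => ∃ p', q = ⟨R, p'⟩ ∧ D.det p p' ∧ ¬ D.det p' p ∧
      chosenFact B p' a' p = a ∧ IsBlockValue B p' a' ∧ l.length ≤ D.rank ⟨R, p'⟩ ∧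
        ¬ Provided B origin y l R p' a'

/-- A fact has to be generated for `a` with tag `t` at the block represented by `p`. -/
structure Generates {R : σ.Rel} (p : Fin (σ.ar R)) (a : B.Elem) (t : Tag σ B.Elem T.colors) :
    Prop where
  isBlockValue : IsBlockValue B p a
  trail_le : t.trail.length ≤ D.rank ⟨R, p⟩
  hasGap : t.pattern.HasGap
  not_provided : ¬ Provided B t.origin t.pattern t.trail R p a

open Classical in
/-- The tag at position `j` of the fact generated for `a` with tag `t` at block `p`: it is kept
on the block, the fact is recorded on the trail at positions determining the block, and the tag
is renewed elsewhere. -/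
noncomputable def tagAt {R : σ.Rel} (p : Fin (σ.ar R)) (a : B.Elem) (t : Tag σ B.Elem T.colors)
    (j : Fin (σ.ar R)) : Tag σ B.Elem T.colors :=
  if D.blockRep j = p then t
  else if D.det j p then ⟨t.origin, t.pattern, (⟨R, p⟩, a) :: t.trail⟩
  else ⟨.fact ⟨R, p⟩ a, (T.encode t).mask D p j, []⟩

/-- The fact generated for `a` with tag `t` at block `p`. -/
noncomputable def generatedFact {R : σ.Rel} (p : Fin (σ.ar R)) (a : B.Elem)
    (t : Tag σ B.Elem T.colors) (j : Fin (σ.ar R)) : T.Elem :=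
  (chosenFact B p a j, T.tagAt p a t j)

/-- The generated facts. -/
def generatedInst : Inst σ T.Elem :=
  {F | ∃ p a t, T.Generates p a t ∧ F.2 = T.generatedFact p a t}

/-- The seed facts together with the generated facts. -/
def taggedInst : Inst σ T.Elem :=
  {F | (∃ t, (⟨F.1, t⟩ : Fact σ α) ∈ I ∧ F.2 = fun j => (B.embed (t j), T.seedTag)) ∨
    F ∈ T.generatedInst}

variable {T} {R : σ.Rel} {p p' j : Fin (σ.ar R)} {a a' : B.Elem} {t t' : Tag σ B.Elem T.colors}
  {f f' : Fin (σ.ar R) → T.Elem}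

theorem mem_generatedInst : (⟨R, f⟩ : Fact σ T.Elem) ∈ T.generatedInst ↔
    ∃ (p : Fin (σ.ar R)) (a : B.Elem) (t : _), T.Generates p a t ∧ f = T.generatedFact p a t :=
  Iff.rfl

theorem mem_taggedInst : (⟨R, f⟩ : Fact σ T.Elem) ∈ T.taggedInst ↔
    (∃ s : Fin (σ.ar R) → α, (⟨R, s⟩ : Fact σ α) ∈ I ∧
      f = fun j => (B.embed (s j), T.seedTag)) ∨ (⟨R, f⟩ : Fact σ T.Elem) ∈ T.generatedInst :=
  Iff.rfl

theorem tagAt_of_blockRep_eq (h : D.blockRep j = p) : T.tagAt p a t j = t := if_pos h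

theorem tagAt_of_det (h : D.blockRep j ≠ p) (hdet : D.det j p) :
    T.tagAt p a t j = ⟨t.origin, t.pattern, (⟨R, p⟩, a) :: t.trail⟩ := by
  rw [tagAt, if_neg h, if_pos hdet]

theorem tagAt_of_not_det (h : ¬ D.det j p) :
    T.tagAt p a t j = ⟨.fact ⟨R, p⟩ a, (T.encode t).mask D p j, []⟩ := by
  have hne : D.blockRep j ≠ p := fun hj => h (hj ▸ RankedDeps.det_blockRep)
  rw [tagAt, if_neg hne, if_neg h]

theorem fst_mem_of_mem_generatedInst (hf : (⟨R, f⟩ : Fact σ T.Elem) ∈ T.generatedInst) :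
    (⟨R, fun j => (f j).1⟩ : Fact σ B.Elem) ∈ B.inst := by
  obtain ⟨p, a, t, hgen, rfl⟩ := mem_generatedInst.1 hf
  exact chosenFact_mem hgen.isBlockValue.occursAt

/-! #### Occurrences in the tagged model -/

theorem rank_lt_of_det (hp : D.blockRep p = p) (hne : D.blockRep j ≠ p) (hdet : D.det j p) :
    D.rank ⟨R, p⟩ < D.rank ⟨R, j⟩ := by
  by_contra! hle
  exact hne ((RankedDeps.blockRep_eq hdet (D.det_symm hdet hle)).trans hp)

theorem Generates.hasGap_tagAt_and_trail_le (hgen : T.Generates p a t) (j : Fin (σ.ar R)) :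
    (T.tagAt p a t j).pattern.HasGap ∧ (T.tagAt p a t j).trail.length ≤ D.rank ⟨R, j⟩ := by
  by_cases hj : D.blockRep j = p
  · rw [tagAt_of_blockRep_eq hj]
    refine ⟨hgen.hasGap, ?_⟩
    rw [← RankedDeps.rank_blockRep, hj]
    exact hgen.trail_le
  by_cases hdet : D.det j p
  · rw [tagAt_of_det hj hdet]
    exact ⟨hgen.hasGap,
      hgen.trail_le.trans_lt (rank_lt_of_det hgen.isBlockValue.blockRep_eq hj hdet)⟩
  · rw [tagAt_of_not_det hdet]
    exact ⟨Pattern.hasGap_mask hdet, Nat.zero_le _⟩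

theorem Generates.occursAt_taggedInst (hgen : T.Generates p a t) (j : Fin (σ.ar R)) :
    occursAt T.taggedInst ⟨R, j⟩ (chosenFact B p a j, T.tagAt p a t j) :=
  ⟨T.generatedFact p a t, Or.inr ⟨p, a, t, hgen, rfl⟩, rfl⟩

theorem chosenFact_eq_of_blockRep {F : Fin (σ.ar R) → B.Elem}
    (hF : (⟨R, F⟩ : Fact σ B.Elem) ∈ B.inst) (ha : IsBlockValue B p a)
    (h : chosenFact B p a (D.blockRep j) = F (D.blockRep j)) : chosenFact B p a j = F j :=
  B.eq_of_blockRep_eq RankedDeps.blockRep_blockRep (chosenFact_mem ha.occursAt) hF h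

theorem occursAt_taggedInst_of_provided {F : Fin (σ.ar R) → B.Elem}
    (hF : (⟨R, F⟩ : Fact σ B.Elem) ∈ B.inst) (hgap : t.pattern.HasGap)
    (h : Provided B t.origin t.pattern t.trail R (D.blockRep j) (F (D.blockRep j))) :
    occursAt T.taggedInst ⟨R, j⟩ (F j, t) := by
  obtain ⟨_ | _ | ⟨q, a'⟩, y, _ | ⟨⟨q, a'⟩, l⟩⟩ := t
  case blank.nil => exact h.elim
  case seed.nil =>
    obtain ⟨rfl, s, hs, hval⟩ := h
    have hFj : F j = B.embed (s j) :=
      B.eq_of_blockRep_eq RankedDeps.blockRep_blockRep hF (B.embed_hom hs) hval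
    exact ⟨fun i => (B.embed (s i), T.seedTag), Or.inl ⟨s, hs, rfl⟩, by rw [hFj]; rfl⟩
  case fact.nil =>
    obtain ⟨p, rfl, hdet, hval, ha, hmask⟩ := h
    have hgen : T.Generates p a' ⟨.blank, y, []⟩ := ⟨ha, Nat.zero_le _, hgap, fun h => h⟩
    have hj : ¬ D.det j p := fun h => hdet (D.det_trans RankedDeps.blockRep_det h)
    rw [← chosenFact_eq_of_blockRep hF ha hval]
    have hocc := hgen.occursAt_taggedInst j
    rwa [tagAt_of_not_det hj, T.encode_blank,
      ← Pattern.mask_congr RankedDeps.blockRep_blockRep, hmask] at hocc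
  all_goals
    obtain ⟨p, rfl, hdet, hdet', hval, ha, hlen, hprov⟩ := h
    have hgen : T.Generates p a' ⟨_, y, l⟩ := ⟨ha, hlen, hgap, hprov⟩
    have hj : D.blockRep j ≠ p := fun h => hdet' (h ▸ D.det_refl p)
    rw [← chosenFact_eq_of_blockRep hF ha hval]
    have hocc := hgen.occursAt_taggedInst j
    rwa [tagAt_of_det hj (D.det_trans RankedDeps.det_blockRep hdet)] at hocc

theorem occursAt_taggedInst_iff {q : σ.Pos} {v : B.Elem} :
    occursAt T.taggedInst q (v, t) ↔
      occursAt B.inst q v ∧ t.pattern.HasGap ∧ t.trail.length ≤ D.rank q := by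
  obtain ⟨R, j⟩ := q
  constructor
  · rintro ⟨f, hf, hval⟩
    obtain ⟨s, hs, rfl⟩ | hf := mem_taggedInst.1 hf
    · obtain ⟨rfl, rfl⟩ := Prod.mk.inj hval
      exact ⟨⟨_, B.embed_hom hs, rfl⟩, ⟨⟨R, j⟩, rfl⟩, Nat.zero_le _⟩
    · obtain ⟨p, a, t', hgen, rfl⟩ := mem_generatedInst.1 hf
      obtain ⟨rfl, rfl⟩ := Prod.mk.inj hval
      exact ⟨⟨_, chosenFact_mem hgen.isBlockValue.occursAt, rfl⟩, hgen.hasGap_tagAt_and_trail_le j⟩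
  · rintro ⟨⟨F, hF, rfl⟩, hgap, hlen⟩
    by_cases hprov :
        Provided B t.origin t.pattern t.trail R (D.blockRep j) (F (D.blockRep j))
    · exact occursAt_taggedInst_of_provided hF hgap hprov
    · have ha : IsBlockValue B (D.blockRep j) (F (D.blockRep j)) :=
        ⟨RankedDeps.blockRep_blockRep, occursAt_of_mem hF _⟩
      have hgen : T.Generates (D.blockRep j) (F (D.blockRep j)) t :=
        ⟨ha, hlen.trans_eq RankedDeps.rank_blockRep.symm, hgap, hprov⟩
      have hocc := hgen.occursAt_taggedInst j
      rwa [tagAt_of_blockRep_eq rfl,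
        chosenFact_eq_of_blockRep hF ha (chosenFact_apply_self ha.occursAt)] at hocc

theorem includes_taggedInst {p q : σ.Pos} (h : D.incl p q) : Includes T.taggedInst p q := by
  rintro ⟨v, t⟩ hv
  rw [occursAt_taggedInst_iff] at hv ⊢
  exact ⟨B.includes h v hv.1, hv.2.1, hv.2.2.trans (D.rank_le_of_incl h)⟩

/-! #### Generated facts with common elements -/

theorem ne_seed_of_mem_generatedInst (hf : (⟨R, f⟩ : Fact σ T.Elem) ∈ T.generatedInst)
    {s : Fin (σ.ar R) → α} (hs : (⟨R, s⟩ : Fact σ α) ∈ I) :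
    f j ≠ (B.embed (s j), T.seedTag) := by
  obtain ⟨p, a, t, hgen, rfl⟩ := mem_generatedInst.1 hf
  intro h
  obtain ⟨hval, htag⟩ : chosenFact B p a j = B.embed (s j) ∧ T.tagAt p a t j = T.seedTag :=
    Prod.mk.inj h
  by_cases hj : D.blockRep j = p
  · rw [tagAt_of_blockRep_eq hj] at htag
    subst htag
    have hp : D.blockRep j = D.blockRep p := by rw [hgen.isBlockValue.blockRep_eq, hj]
    have hocc := hgen.isBlockValue.occursAt
    have ha := B.eq_of_blockRep_eq hp (chosenFact_mem hocc) (B.embed_hom hs) hval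
    rw [chosenFact_apply_self hocc] at ha
    exact hgen.not_provided ⟨rfl, s, hs, ha⟩
  by_cases hdet : D.det j p
  · simp [tagAt_of_det hj hdet, seedTag] at htag
  · simp [tagAt_of_not_det hdet, seedTag] at htag

theorem Generates.eq_of_tagAt_eq (hgen : T.Generates p a t) (hgen' : T.Generates p' a' t')
    (hj : D.blockRep j = p) (hval : chosenFact B p a j = chosenFact B p' a' j)
    (htag : T.tagAt p' a' t' j = t) : p = p' ∧ a = a' ∧ t = t' := by
  have hblock : D.blockRep j = D.blockRep p := by rw [hgen.isBlockValue.blockRep_eq, hj]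
  have hvalp := B.eq_of_blockRep_eq hblock (chosenFact_mem hgen.isBlockValue.occursAt)
    (chosenFact_mem hgen'.isBlockValue.occursAt) hval
  rw [chosenFact_apply_self hgen.isBlockValue.occursAt] at hvalp
  have hpj : D.det p j := hj ▸ RankedDeps.blockRep_det
  have hjp : D.det j p := hj ▸ RankedDeps.det_blockRep
  by_cases hj' : D.blockRep j = p'
  · obtain rfl : p = p' := hj.symm.trans hj'
    rw [chosenFact_apply_self hgen'.isBlockValue.occursAt] at hvalp
    exact ⟨rfl, hvalp, htag.symm.trans (tagAt_of_blockRep_eq hj')⟩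
  by_cases hdet : D.det j p'
  · rw [tagAt_of_det hj' hdet] at htag
    subst htag
    refine absurd ⟨p', rfl, D.det_trans hpj hdet, fun h => hj' ?_, hvalp.symm,
      hgen'.isBlockValue, hgen'.trail_le, hgen'.not_provided⟩ hgen.not_provided
    rw [← hgen'.isBlockValue.blockRep_eq]
    exact RankedDeps.blockRep_eq hdet (D.det_trans h hpj)
  · rw [tagAt_of_not_det hdet] at htag
    subst htag
    refine absurd ⟨p', rfl, fun h => hdet (D.det_trans hjp h), hvalp.symm,
      hgen'.isBlockValue, ?_⟩ hgen.not_provided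
    rw [Pattern.mask_congr hblock, Pattern.mask_mask]

theorem Generates.eq_of_generatedFact_eq (hgen : T.Generates p a t) (hgen' : T.Generates p' a' t')
    (h : T.generatedFact p a t j = T.generatedFact p' a' t' j) :
    p = p' ∧ a = a' ∧ (t = t' ∨
      ¬ D.det j p ∧ (T.encode t).mask D p j = (T.encode t').mask D p j) := by
  obtain ⟨hval, htag⟩ : chosenFact B p a j = chosenFact B p' a' j ∧
    T.tagAt p a t j = T.tagAt p' a' t' j := Prod.mk.inj h
  by_cases hj : D.blockRep j = p
  · rw [tagAt_of_blockRep_eq hj] at htag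
    obtain ⟨hp, ha, ht⟩ := hgen.eq_of_tagAt_eq hgen' hj hval htag.symm
    exact ⟨hp, ha, Or.inl ht⟩
  by_cases hj' : D.blockRep j = p'
  · rw [tagAt_of_blockRep_eq hj'] at htag
    obtain ⟨hp, ha, ht⟩ := hgen'.eq_of_tagAt_eq hgen hj' hval.symm htag
    exact ⟨hp.symm, ha.symm, Or.inl ht.symm⟩
  by_cases hdet : D.det j p <;> by_cases hdet' : D.det j p'
  · rw [tagAt_of_det hj hdet, tagAt_of_det hj' hdet'] at htag
    simp only [Tag.mk.injEq, List.cons.injEq, Prod.mk.injEq, Sigma.mk.injEq, heq_eq_eq,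
      true_and] at htag
    obtain ⟨horigin, hpattern, ⟨hp, ha⟩, htrail⟩ := htag
    exact ⟨hp, ha, Or.inl (Tag.ext horigin hpattern htrail)⟩
  · simp [tagAt_of_det hj hdet, tagAt_of_not_det hdet'] at htag
  · simp [tagAt_of_not_det hdet, tagAt_of_det hj' hdet'] at htag
  · rw [tagAt_of_not_det hdet, tagAt_of_not_det hdet'] at htag
    simp only [Tag.mk.injEq, Origin.fact.injEq, Sigma.mk.injEq, heq_eq_eq, true_and,
      and_true] at htag
    obtain ⟨⟨rfl, ha⟩, hmask⟩ := htag
    exact ⟨rfl, ha, Or.inr ⟨hdet, hmask⟩⟩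

theorem fst_eq_of_mem_generatedInst (hf : (⟨R, f⟩ : Fact σ T.Elem) ∈ T.generatedInst)
    (hf' : (⟨R, f'⟩ : Fact σ T.Elem) ∈ T.generatedInst) (hj : f j = f' j) :
    (fun i => (f i).1) = fun i => (f' i).1 := by
  obtain ⟨p, a, t, hgen, rfl⟩ := mem_generatedInst.1 hf
  obtain ⟨p', a', t', hgen', rfl⟩ := mem_generatedInst.1 hf'
  obtain ⟨rfl, rfl, -⟩ := hgen.eq_of_generatedFact_eq hgen' hj
  rfl

theorem determines_generatedInst {L : Set (Fin (σ.ar R))} {r : Fin (σ.ar R)} (hL : L.Nonempty)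
    (hr : ∀ d, (∀ l ∈ L, D.det d l) → D.det d r) : Determines T.generatedInst L r := by
  intro f f' hf hf' heq
  obtain ⟨p, a, t, hgen, rfl⟩ := mem_generatedInst.1 hf
  obtain ⟨p', a', t', hgen', rfl⟩ := mem_generatedInst.1 hf'
  obtain ⟨l, hl⟩ := id hL
  obtain ⟨rfl, rfl, -⟩ := hgen.eq_of_generatedFact_eq hgen' (heq l hl)
  by_cases ht : t = t'
  · rw [ht]
  have hencode : T.encode t ≠ T.encode t' := fun h =>
    ht (T.encode_inj hgen.hasGap hgen'.hasGap (hgen.trail_le.trans (T.rank_le _))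
      (hgen'.trail_le.trans (T.rank_le _)) h)
  have hmask : ∀ l ∈ L, (T.encode t).mask D p l = (T.encode t').mask D p l := fun l hl =>
    ((hgen.eq_of_generatedFact_eq hgen' (heq l hl)).2.2.resolve_left ht).2
  obtain ⟨hmask_r, hdet⟩ := Pattern.mask_eq_of_forall_mask_eq hL hr hencode hmask
  simp only [generatedFact, tagAt_of_not_det hdet, hmask_r]

end Tagging

/-! ### Acyclicity of small families of bundles -/

section Bundle

open ReducedWord

variable {S C V U : Type} {N k : ℕ} {κ : S → C}

/-- A bundle of colour `c` at a group element `g`. Given a colouring `κ` of the generators, it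
stands for the group elements `g * toggle s` with `κ s = c`. -/
abbrev Bundle (S C : Type) (N : ℕ) : Type := C × Equiv.Perm (ReducedWord S N)

/-- The element of the bundle `ε` with index `s` belongs to another bundle of the family `Φ`. -/
def IsShared (κ : S → C) (Φ : Finset (Bundle S C N)) (ε : Bundle S C N) (s : S) : Prop :=
  κ s = ε.1 ∧ ∃ η ∈ Φ, η ≠ ε ∧ ∃ t, κ t = η.1 ∧ ε.2 * toggle s = η.2 * toggle t

theorem IsShared.exists_adjacent {Φ : Finset (Bundle S C N)} {ε : Bundle S C N} {s : S}
    (h : IsShared κ Φ ε s) : ∃ η ∈ Φ, ∃ u, s ≠ u ∧ η.2 = ε.2 * toggle s * toggle u := by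
  obtain ⟨hs, η, hη, hne, u, hu, heq⟩ := h
  refine ⟨η, hη, u, ?_, by rw [heq, mul_assoc, toggle_mul_self, mul_one]⟩
  rintro rfl
  exact hne (Prod.ext (hu.symm.trans hs) (mul_right_cancel heq.symm))

section Walk

variable {g : ℕ → Equiv.Perm (ReducedWord S N)} {s u : ℕ → S}

theorem exists_word_of_walk (hsu : ∀ i, s i ≠ u i) (hus : ∀ i, u i ≠ s (i + 1))
    (hg : ∀ i, g (i + 1) = g i * toggle (s i) * toggle (u i)) (m i : ℕ) :
    ∃ w : List S, w.length = 2 * m ∧ w.IsChain (· ≠ ·) ∧ (∀ x ∈ w.head?, x = s i) ∧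
      g (i + m) = g i * (w.map toggle).prod := by
  induction m generalizing i with
  | zero => exact ⟨[], by simp⟩
  | succ m ih =>
    obtain ⟨w, hlen, hchain, hhead, hprod⟩ := ih (i + 1)
    refine ⟨s i :: u i :: w, by simp only [List.length_cons, hlen]; ring, ?_, by simp, ?_⟩
    · exact .cons_cons (hsu i) (List.isChain_cons.2 ⟨fun x hx => hhead x hx ▸ hus i, hchain⟩)
    · rw [← Nat.succ_add_eq_add_succ, hprod, hg]
      simp only [List.map_cons, List.prod_cons, mul_assoc]

theorem ne_of_walk (hsu : ∀ i, s i ≠ u i) (hus : ∀ i, u i ≠ s (i + 1))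
    (hg : ∀ i, g (i + 1) = g i * toggle (s i) * toggle (u i)) {i j : ℕ} (hij : i < j)
    (hj : 2 * j ≤ N) : g i ≠ g j := by
  obtain ⟨w, hlen, hchain, -, hprod⟩ := exists_word_of_walk hsu hus hg (j - i) i
  rw [Nat.add_sub_cancel' hij.le] at hprod
  intro h
  refine prod_map_toggle_ne_one hchain (by omega) ?_ (mul_eq_left.1 (h.trans hprod).symm)
  exact List.ne_nil_of_length_pos (by omega)

end Walk

-- Otherwise one could walk through the family forever without backtracking, hence revisit a
-- bundle within `k` steps, giving a nontrivial reduced word of length at most `2 * k` equal to `1`.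
theorem exists_subsingleton_isShared {Φ : Finset (Bundle S C (2 * k))} (hΦ : Φ.Nonempty)
    (hcard : Φ.card ≤ k) : ∃ ε ∈ Φ, {s | IsShared κ Φ ε s}.Subsingleton := by
  by_contra! hcon
  have hstep : ∀ z : Φ × S, ∃ (η : Φ) (s u : S), z.2 ≠ s ∧ s ≠ u ∧
      η.1.2 = z.1.1.2 * toggle s * toggle u := by
    rintro ⟨⟨ε, hε⟩, t⟩
    obtain ⟨s, hs, hst⟩ := (hcon ε hε).exists_ne t
    obtain ⟨η, hη, u, hsu, heq⟩ := IsShared.exists_adjacent hs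
    exact ⟨⟨η, hη⟩, s, u, hst.symm, hsu, heq⟩
  choose η s u hts hsu hmul using hstep
  obtain ⟨ε₀, hε₀⟩ := hΦ
  obtain ⟨s₀, -⟩ := (hcon ε₀ hε₀).nonempty
  let z (i : ℕ) : Φ × S := (fun z => (η z, u z))^[i] (⟨ε₀, hε₀⟩, s₀)
  have hz (i : ℕ) : z (i + 1) = (η (z i), u (z i)) := Function.iterate_succ_apply' _ _ _
  have hne {i j : ℕ} (hij : i < j) (hj : j ≤ k) : (z i).1 ≠ (z j).1 := fun h =>
    ne_of_walk (g := fun i => (z i).1.1.2) (fun i => hsu (z i))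
      (fun i => by simpa only [hz] using hts (z (i + 1)))
      (fun i => by simp only [hz, hmul]) hij (by omega) (by rw [h])
  obtain ⟨i, j, hij, heq⟩ := Fintype.exists_ne_map_eq_of_card_lt
    (fun i : Fin (k + 1) => (z i).1) (by simpa [Nat.lt_succ_iff] using hcard)
  rcases lt_or_gt_of_ne hij with h | h
  · exact hne h (Nat.lt_succ_iff.1 j.2) heq
  · exact hne h (Nat.lt_succ_iff.1 i.2) heq.symm

/-- Requirements on the labels in `U` of pairs of a value in `V` and a group element: labels are
related to values to a certain level, and the labels along a bundle have to be admissible for its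
colour. Admissible labels along a bundle can be found even if one of them is prescribed, at the
cost of one level. -/
structure LabelSystem (κ : S → C) (val : S → V) (U : Type) (k : ℕ) where
  level : ℕ → V → U → Prop
  of_succ : ∀ {m v u}, level (m + 1) v u → level m v u
  total : ∀ m v, ∃ u, level m v u
  admissible : C → Set (S → U)
  admissible_congr : ∀ {c f f'}, (∀ s, κ s = c → f s = f' s) → f ∈ admissible c →
    f' ∈ admissible c
  extend : ∀ {c m} {Q : Set S} {h : S → U}, m < k → (∀ s ∈ Q, κ s = c) → Q.Subsingleton →
    (∀ s, level (m + 1) (val s) (h s)) →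
    ∃ f ∈ admissible c, (∀ s ∈ Q, f s = h s) ∧ ∀ s, κ s = c → level m (val s) (f s)

theorem exists_relabelling {val : S → V} (hN : 2 ≤ N) {Φ : Finset (Bundle S C N)}
    {ε : Bundle S C N} {h : V × Equiv.Perm (ReducedWord S N) → U} {f : S → U}
    (hf : ∀ s, IsShared κ Φ ε s → f s = h (val s, ε.2 * toggle s)) :
    ∃ h' : V × Equiv.Perm (ReducedWord S N) → U,
      (∀ s, κ s = ε.1 → h' (val s, ε.2 * toggle s) = f s) ∧
      (∀ η ∈ Φ, η ≠ ε → ∀ t, κ t = η.1 →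
        h' (val t, η.2 * toggle t) = h (val t, η.2 * toggle t)) ∧
      ∀ x, h' x = h x ∨ ∃ s, κ s = ε.1 ∧ x = (val s, ε.2 * toggle s) := by
  let pt (s : {s // κ s = ε.1}) : V × Equiv.Perm (ReducedWord S N) := (val s, ε.2 * toggle s.1)
  have hpt : Function.Injective pt := fun s t hst =>
    Subtype.ext (toggle_injective hN (mul_left_cancel (congrArg Prod.snd hst)))
  let h' := Function.extend pt (fun s => f s) h
  have h'_pt (s : S) (hs : κ s = ε.1) : h' (val s, ε.2 * toggle s) = f s :=
    hpt.extend_apply _ _ ⟨s, hs⟩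
  have h'_cases (x) : h' x = h x ∨ ∃ s, κ s = ε.1 ∧ x = (val s, ε.2 * toggle s) := by
    by_cases hx : ∃ s, pt s = x
    · obtain ⟨⟨s, hs⟩, rfl⟩ := hx
      exact Or.inr ⟨s, hs, rfl⟩
    · exact Or.inl (Function.extend_apply' _ _ _ hx)
  refine ⟨h', h'_pt, fun η hη hne t ht => ?_, h'_cases⟩
  obtain heq | ⟨s, hs, hst⟩ := h'_cases (val t, η.2 * toggle t)
  · exact heq
  · rw [hst, h'_pt s hs]
    exact hf s ⟨hs, η, hη, hne, t, ht, (congrArg Prod.snd hst).symm⟩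

open Classical in
theorem LabelSystem.exists_labelling {val : S → V} (Λ : LabelSystem κ val U k) (m : ℕ)
    (hm : m ≤ k) (Φ : Finset (Bundle S C (2 * k))) (hΦ : Φ.card = m) :
    ∃ h : V × Equiv.Perm (ReducedWord S (2 * k)) → U, (∀ x, Λ.level (k - m) x.1 (h x)) ∧
      ∀ ε ∈ Φ, (fun s => h (val s, ε.2 * toggle s)) ∈ Λ.admissible ε.1 := by
  induction m generalizing Φ with
  | zero =>
    choose u hu using Λ.total k
    rw [Finset.card_eq_zero.1 hΦ]
    exact ⟨fun x => u x.1, fun x => hu x.1, by simp⟩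
  | succ m ih =>
    obtain ⟨ε, hε, hshared⟩ := exists_subsingleton_isShared (κ := κ)
      (Finset.card_pos.1 (hΦ ▸ m.succ_pos)) (hΦ.trans_le hm)
    obtain ⟨h, hlevel, hadm⟩ := ih (by omega) (Φ.erase ε)
      (by rw [Finset.card_erase_of_mem hε, hΦ, Nat.add_sub_cancel])
    rw [show k - m = k - (m + 1) + 1 by omega] at hlevel
    obtain ⟨f, hf, hfh, hflevel⟩ := Λ.extend (c := ε.1) (m := k - (m + 1))
      (Q := {s | IsShared κ Φ ε s}) (h := fun s => h (val s, ε.2 * toggle s)) (by omega)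
      (fun s hs => hs.1) hshared fun s => hlevel (val s, _)
    obtain ⟨h', h'_ε, h'_η, h'_cases⟩ := exists_relabelling (by omega) hfh
    refine ⟨h', fun x => ?_, fun η hη => ?_⟩
    · obtain hx | ⟨s, hs, rfl⟩ := h'_cases x
      · exact hx ▸ Λ.of_succ (hlevel x)
      · exact h'_ε s hs ▸ hflevel s hs
    · by_cases hne : η = ε
      · exact hne ▸ Λ.admissible_congr (fun s hs => (h'_ε s hs).symm) hf
      · exact Λ.admissible_congr (fun t ht => (h'_η η hη hne t ht).symm)
          (hadm η (Finset.mem_erase.2 ⟨hne, hη⟩))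

end Bundle

/-! ### The cover of the tagged model -/

theorem finite_setOf_forall_mem {A : Set α} (hA : A.Finite) :
    {F : Fact σ α | ∀ i, F.2 i ∈ A}.Finite := by
  have := hA.to_subtype
  refine (Set.finite_range fun F : Fact σ A => (⟨F.1, fun i => F.2 i⟩ : Fact σ α)).subset ?_
  rintro ⟨R, t⟩ ht
  exact ⟨⟨R, fun i => ⟨t i, ht i⟩⟩, rfl⟩

namespace Tagging

open ReducedWord

/-- The generators of the covering group: one for each element of the seed instance and one for
each position of each fact over `V`. -/
abbrev Slot (σ : Sig) (α V : Type) : Type := α ⊕ Σ F : Fact σ V, Fin (σ.ar F.1)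

/-- All seed slots have the colour `none`, and the slots of a fact `F` have the colour `F`. -/
def slotColor {V : Type} : Slot σ α V → Option (Fact σ V)
  | .inl _ => none
  | .inr x => some x.1

variable {D : RankedDeps σ} {I : Inst σ α} {n k : ℕ} {B : BaseModel D I n}

/-- The element of the base model in a slot. -/
def slotValue (B : BaseModel D I n) : Slot σ α B.Elem → B.Elem
  | .inl a => B.embed a
  | .inr x => x.1.2 x.2

/-- The fact `f` of the tagged model has the slots `s`. -/
def HasSlots (T : Tagging D B.Elem) {R : σ.Rel} (f : Fin (σ.ar R) → T.Elem)
    (s : Fin (σ.ar R) → Slot σ α B.Elem) : Prop :=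
  (∃ t : Fin (σ.ar R) → α, (⟨R, t⟩ : Fact σ α) ∈ I ∧
    f = (fun j => (B.embed (t j), T.seedTag)) ∧ s = fun j => .inl (t j)) ∨
  ((⟨R, f⟩ : Fact σ T.Elem) ∈ T.generatedInst ∧ s = fun j => .inr ⟨⟨R, fun i => (f i).1⟩, j⟩)

/-- The elements of the cover: elements of the tagged model with a group element. -/
abbrev CoverElem (T : Tagging D B.Elem) (k : ℕ) : Type :=
  T.Elem × Equiv.Perm (ReducedWord (Slot σ α B.Elem) (2 * k))

/-- The copies of the facts of the tagged model: one for each group element `g`, whose values are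
in the sheets given by `g` times the generators of the slots. -/
def cover (T : Tagging D B.Elem) (k : ℕ) : Inst σ (T.CoverElem k) :=
  {F | ∃ f s g, T.HasSlots f s ∧ F.2 = fun j => (f j, g * toggle (s j))}

variable {T : Tagging D B.Elem} {R : σ.Rel} {f f' : Fin (σ.ar R) → T.Elem}
  {s s' : Fin (σ.ar R) → Slot σ α B.Elem}

theorem mem_cover {F : Fin (σ.ar R) → T.CoverElem k} :
    (⟨R, F⟩ : Fact σ (T.CoverElem k)) ∈ T.cover k ↔
      ∃ (f : Fin (σ.ar R) → T.Elem) (s : Fin (σ.ar R) → Slot σ α B.Elem) (g : _),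
        T.HasSlots f s ∧ F = fun j => (f j, g * toggle (s j)) :=
  Iff.rfl

theorem HasSlots.mem_taggedInst (h : T.HasSlots f s) :
    (⟨R, f⟩ : Fact σ T.Elem) ∈ T.taggedInst := by
  obtain ⟨t, ht, hf, -⟩ | ⟨hf, -⟩ := h
  · exact Or.inl ⟨t, ht, hf⟩
  · exact Or.inr hf

theorem exists_hasSlots (h : (⟨R, f⟩ : Fact σ T.Elem) ∈ T.taggedInst) : ∃ s, T.HasSlots f s := by
  obtain ⟨t, ht, hf⟩ | hf := Tagging.mem_taggedInst.1 h
  · exact ⟨_, Or.inl ⟨t, ht, hf, rfl⟩⟩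
  · exact ⟨_, Or.inr ⟨hf, rfl⟩⟩

theorem HasSlots.slotValue (h : T.HasSlots f s) (j : Fin (σ.ar R)) :
    slotValue B (s j) = (f j).1 := by
  obtain ⟨t, -, rfl, rfl⟩ | ⟨-, rfl⟩ := h <;> rfl

theorem HasSlots.slot_eq (h : T.HasSlots f s) (h' : T.HasSlots f' s') {j : Fin (σ.ar R)}
    (hj : f j = f' j) : s j = s' j := by
  obtain ⟨t, ht, rfl, rfl⟩ | ⟨hf, rfl⟩ := h <;> obtain ⟨t', ht', rfl, rfl⟩ | ⟨hf', rfl⟩ := h'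
  · exact congrArg Sum.inl (B.embed_injective (congrArg Prod.fst hj))
  · exact absurd hj.symm (ne_seed_of_mem_generatedInst hf' ht)
  · exact absurd hj (ne_seed_of_mem_generatedInst hf ht')
  · rw [fst_eq_of_mem_generatedInst hf hf' hj]

theorem occursAt_cover_iff {p : σ.Pos} {w : T.Elem} {g : _} :
    occursAt (T.cover k) p (w, g) ↔ occursAt T.taggedInst p w := by
  constructor
  · rintro ⟨F, hF, hval⟩
    obtain ⟨f, s, g', hs, rfl⟩ := mem_cover.1 hF
    exact ⟨f, hs.mem_taggedInst, congrArg Prod.fst hval⟩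
  · rintro ⟨f, hf, rfl⟩
    obtain ⟨s, hs⟩ := exists_hasSlots hf
    refine ⟨_, mem_cover.2 ⟨f, s, g * toggle (s p.2), hs, rfl⟩, ?_⟩
    simp only [mul_assoc, toggle_mul_self, mul_one]

theorem includes_cover {p q : σ.Pos} (h : D.incl p q) : Includes (T.cover k) p q := by
  rintro ⟨w, g⟩ hw
  rw [occursAt_cover_iff] at hw ⊢
  exact includes_taggedInst h w hw

theorem cover_finite [Finite α] : (T.cover k).Finite := by
  have htags := finite_setOf_trail_length_le (σ := σ) (V := B.Elem) (K := T.colors) T.maxRank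
  refine (finite_setOf_forall_mem (((Set.finite_univ (α := B.Elem)).prod htags).prod
    Set.finite_univ)).subset ?_
  rintro ⟨R, F⟩ hF j
  have hocc := occursAt_taggedInst_iff.1 (occursAt_cover_iff.1 (occursAt_of_mem hF j))
  exact ⟨⟨trivial, hocc.2.2.trans (T.rank_le _)⟩, trivial⟩

theorem determines_taggedInst {L : Set (Fin (σ.ar R))} {r : Fin (σ.ar R)} (hL : L.Nonempty)
    (hr : ∀ d, (∀ l ∈ L, D.det d l) → D.det d r) (hI : Determines I L r) :
    Determines T.taggedInst L r := by
  intro f f' hf hf' heq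
  obtain ⟨l, hl⟩ := id hL
  obtain ⟨t, ht, rfl⟩ | hf := Tagging.mem_taggedInst.1 hf <;>
    obtain ⟨t', ht', rfl⟩ | hf' := Tagging.mem_taggedInst.1 hf'
  · have hemb : ∀ l ∈ L, t l = t' l := fun l hl =>
      B.embed_injective (congrArg Prod.fst (heq l hl))
    simp only [hI t t' ht ht' hemb]
  · exact absurd (heq l hl).symm (ne_seed_of_mem_generatedInst hf' ht)
  · exact absurd (heq l hl) (ne_seed_of_mem_generatedInst hf ht')
  · exact determines_generatedInst hL hr f f' hf hf' heq

theorem determines_cover {L : Set (Fin (σ.ar R))} {r : Fin (σ.ar R)} (hL : L.Nonempty)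
    (h : Determines T.taggedInst L r) : Determines (T.cover k) L r := by
  intro F F' hF hF' heq
  obtain ⟨f, s, g, hs, rfl⟩ := mem_cover.1 hF
  obtain ⟨f', s', g', hs', rfl⟩ := mem_cover.1 hF'
  have hf : ∀ l ∈ L, f l = f' l := fun l hl => congrArg Prod.fst (heq l hl)
  have hfr := h f f' hs.mem_taggedInst hs'.mem_taggedInst hf
  obtain ⟨l, hl⟩ := hL
  have hg : g * toggle (s l) = g' * toggle (s' l) := congrArg Prod.snd (heq l hl)
  rw [hs.slot_eq hs' (hf l hl)] at hg
  simp only [hfr, hs.slot_eq hs' hfr, mul_right_cancel hg]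

/-! #### Soundness of the cover -/

section Soundness

variable {M : Inst σ ℕ} {φ : α → ℕ} {S : ℕ → B.Elem → ℕ → Prop}

/-- The labels of the slots by elements of `M` that send seed facts to facts of `M` via `φ` and
other facts of the base model to facts of `M`. -/
def admissibleLabels (B : BaseModel D I n) (M : Inst σ ℕ) (φ : α → ℕ) :
    Option (Fact σ B.Elem) → Set (Slot σ α B.Elem → ℕ)
  | none => {f | ∀ a, f (.inl a) = φ a}
  | some F => {f | F ∈ B.inst → (⟨F.1, fun j => f (.inr ⟨F, j⟩)⟩ : Fact σ ℕ) ∈ M}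

theorem admissibleLabels_congr {c : Option (Fact σ B.Elem)} {f f' : Slot σ α B.Elem → ℕ}
    (h : ∀ s, slotColor s = c → f s = f' s) (hf : f ∈ admissibleLabels B M φ c) :
    f' ∈ admissibleLabels B M φ c := by
  obtain _ | F := c
  · exact fun a => (h (.inl a) rfl).symm.trans (hf a)
  · intro hF
    have hM := hf hF
    simpa only [h (.inr ⟨F, _⟩) rfl] using hM

theorem exists_admissibleLabels_none {m : ℕ} (hS : Simulation B.inst B.embed M φ n S)
    {Q : Set (Slot σ α B.Elem)} {h : Slot σ α B.Elem → ℕ} (hQ : ∀ s ∈ Q, slotColor s = none)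
    (hh : ∀ s, S (m + 1) (slotValue B s) (h s)) :
    ∃ f ∈ admissibleLabels B M φ none, (∀ s ∈ Q, f s = h s) ∧
      ∀ s, slotColor s = none → S m (slotValue B s) (f s) := by
  refine ⟨Sum.elim φ fun _ => 0, fun a => rfl, ?_, ?_⟩
  · rintro (a | x) hs
    · exact (hS.eq_of_seed (hh (.inl a))).symm
    · cases hQ _ hs
  · rintro (a | x) hs
    · exact hS.seed m a
    · cases hs

theorem exists_admissibleLabels_some {m : ℕ} (hS : Simulation B.inst B.embed M φ n S)
    (hm : m < n) {Q : Set (Slot σ α B.Elem)} {h : Slot σ α B.Elem → ℕ} {F : Fact σ B.Elem}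
    (hQ : ∀ s ∈ Q, slotColor s = some F) (hsub : Q.Subsingleton)
    (hh : ∀ s, S (m + 1) (slotValue B s) (h s)) :
    ∃ f ∈ admissibleLabels B M φ (some F), (∀ s ∈ Q, f s = h s) ∧
      ∀ s, slotColor s = some F → S m (slotValue B s) (f s) := by
  by_cases hF : F ∈ B.inst
  swap
  · exact ⟨h, fun h => absurd h hF, fun s _ => rfl, fun s _ => hS.of_succ (hh s)⟩
  obtain ⟨j, hj⟩ : ∃ j, ∀ s ∈ Q, s = .inr ⟨F, j⟩ := by
    obtain rfl | ⟨s, hs⟩ := Q.eq_empty_or_nonempty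
    · exact ⟨⟨0, σ.ar_pos F.1⟩, by simp⟩
    · obtain a | ⟨F, j⟩ := s <;> cases hQ _ hs
      exact ⟨j, fun s' hs' => hsub hs' hs⟩
  obtain ⟨t, ht, htj, hlevel⟩ := hS.step hm hF (hh (.inr ⟨F, j⟩))
  let slot (i : Fin (σ.ar F.1)) : Slot σ α B.Elem := .inr ⟨F, i⟩
  have hslot : Function.Injective slot := fun i i' hi => by simpa [slot] using hi
  have hext (i : Fin (σ.ar F.1)) : Function.extend slot t (fun _ => 0) (.inr ⟨F, i⟩) = t i :=
    hslot.extend_apply t _ i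
  refine ⟨Function.extend slot t fun _ => 0, fun _ => ?_, fun s hs => ?_, fun s hs => ?_⟩
  · simpa only [hext] using ht
  · rw [hj s hs, hext, htj]
  · obtain a | ⟨F, i⟩ := s <;> cases hs
    exact (hext i).symm ▸ hlevel i

/-- A simulation of the base model in `M` as a system of labels for the slots. -/
def labelSystem (hS : Simulation B.inst B.embed M φ n S) :
    LabelSystem slotColor (slotValue B) ℕ n where
  level := S
  of_succ := hS.of_succ
  total := hS.total
  admissible := admissibleLabels B M φ
  admissible_congr := admissibleLabels_congr
  extend {c m Q h} hm hQ hsub hh := by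
    obtain _ | F := c
    · exact exists_admissibleLabels_none hS hQ hh
    · exact exists_admissibleLabels_some hS hm hQ hsub hh

theorem HasSlots.exists_color (hφ : IsHom I M φ) (h : T.HasSlots f s) :
    ∃ c, ∀ h ∈ admissibleLabels B M φ c, (⟨R, fun j => h (s j)⟩ : Fact σ ℕ) ∈ M := by
  obtain ⟨t, ht, -, rfl⟩ | ⟨hf, rfl⟩ := h
  · refine ⟨none, fun h hh => ?_⟩
    simp only [hh _]
    exact hφ ht
  · exact ⟨some _, fun h hh => hh (fst_mem_of_mem_generatedInst hf)⟩

theorem exists_bundle_of_mem_cover (hφ : IsHom I M φ) {F : Fact σ (T.CoverElem k)}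
    (hF : F ∈ T.cover k) :
    ∃ ε : Bundle (Slot σ α B.Elem) (Option (Fact σ B.Elem)) (2 * k), ∀ h : B.Elem × _ → ℕ,
      (fun s => h (slotValue B s, ε.2 * toggle s)) ∈ admissibleLabels B M φ ε.1 →
        (⟨F.1, fun j => h ((F.2 j).1.1, (F.2 j).2)⟩ : Fact σ ℕ) ∈ M := by
  obtain ⟨R, F⟩ := F
  obtain ⟨f, s, g, hs, rfl⟩ := mem_cover.1 hF
  obtain ⟨c, hc⟩ := hs.exists_color hφ
  refine ⟨(c, g), fun h hh => ?_⟩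
  simpa only [hs.slotValue] using hc _ hh

open Classical in
theorem satCQ_of_satCQ_cover (hM : D.IsModelOf I M φ) {q : CQ σ} (hq : q.size ≤ n)
    (h : satCQ (T.cover n) q) : satCQ M q := by
  obtain ⟨x, hx⟩ := h
  obtain ⟨S, hS⟩ := B.simulation hM
  choose ε hε using fun A : {A // A ∈ q.atoms} => exists_bundle_of_mem_cover hM.hom (hx A.1 A.2)
  have hcard : (q.atoms.attach.map ε).toFinset.card ≤ n :=
    (List.toFinset_card_le _).trans (by rw [List.length_map, List.length_attach]; exact hq)
  obtain ⟨label, -, hlabel⟩ := (labelSystem hS).exists_labelling _ hcard _ rfl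
  refine ⟨fun v => label ((x v).1.1, (x v).2), fun A hA => hε ⟨A, hA⟩ label (hlabel _ ?_)⟩
  exact List.mem_toFinset.2 (List.mem_map_of_mem (List.mem_attach _ ⟨A, hA⟩))

end Soundness

end Tagging

/-- A finite model of the dependencies that extends `I` and whose small queries hold in every
model of the inclusions over `I`. -/
structure UniversalModel (D : RankedDeps σ) (I : Inst σ α) (k : ℕ) where
  Elem : Type
  inst : Inst σ Elem
  finite : inst.Finite
  embed : α → Elem
  embed_injective : Function.Injective embed
  embed_hom : IsHom I inst embed
  includes : ∀ {p q}, D.incl p q → Includes inst p q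
  determines : ∀ {R : σ.Rel} {L : Set (Fin (σ.ar R))} {r : Fin (σ.ar R)}, L.Nonempty →
    (∀ d, (∀ l ∈ L, D.det d l) → D.det d r) → Determines I L r → Determines inst L r
  sound : ∀ {M : Inst σ ℕ} {φ : α → ℕ} {q : CQ σ}, D.IsModelOf I M φ → q.size ≤ k →
    satCQ inst q → satCQ M q

open ReducedWord in
theorem nonempty_universalModel [Finite α] {D : RankedDeps σ} {I : Inst σ α}
    (hI : ∀ {R : σ.Rel} {i j : Fin (σ.ar R)}, D.det i j → Determines I {i} j) (k : ℕ) :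
    Nonempty (UniversalModel D I k) := by
  obtain ⟨B⟩ := nonempty_baseModel hI k
  obtain ⟨T⟩ := nonempty_tagging D B.Elem
  exact ⟨{
    Elem := T.CoverElem k
    inst := T.cover k
    finite := T.cover_finite
    embed := fun a => ((B.embed a, T.seedTag), 1 * toggle (.inl a))
    embed_injective := fun a b h => B.embed_injective (congrArg (fun z => z.1.1) h)
    embed_hom := fun R t ht => Tagging.mem_cover.2 ⟨_, _, 1, Or.inl ⟨t, ht, rfl, rfl⟩, rfl⟩
    includes := Tagging.includes_cover
    determines := fun hL hr hdet =>
      Tagging.determines_cover hL (Tagging.determines_taggedInst hL hr hdet)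
    sound := fun hM hq h => Tagging.satCQ_of_satCQ_cover hM hq h }⟩

/-! ### Transfer to the natural numbers -/

/-- The facts over `β` whose image under `f` is in `I`. -/
def comapInst (f : β → α) (I : Inst σ α) : Inst σ β :=
  {F | (⟨F.1, fun i => f (F.2 i)⟩ : Fact σ α) ∈ I}

/-- The image of an instance under `f`. -/
def mapInst (f : α → β) (I : Inst σ α) : Inst σ β :=
  (fun F => (⟨F.1, fun i => f (F.2 i)⟩ : Fact σ β)) '' I

section MapInst

variable {I : Inst σ α} {f : α → β} {R : σ.Rel}

theorem Determines.comapInst {f : β → α} {L : Set (Fin (σ.ar R))} {r : Fin (σ.ar R)}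
    (h : Determines I L r) (hf : Function.Injective f) : Determines (comapInst f I) L r :=
  fun _ _ ht hu heq => hf (h _ _ ht hu fun l hl => congrArg f (heq l hl))

theorem mem_mapInst {t : Fin (σ.ar R) → β} : (⟨R, t⟩ : Fact σ β) ∈ mapInst f I ↔
    ∃ s : Fin (σ.ar R) → α, (⟨R, s⟩ : Fact σ α) ∈ I ∧ t = fun i => f (s i) := by
  constructor
  · rintro ⟨⟨R', s⟩, hs, heq⟩
    obtain ⟨rfl, heq⟩ := Sigma.mk.inj heq
    exact ⟨s, hs, (eq_of_heq heq).symm⟩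
  · rintro ⟨s, hs, rfl⟩
    exact ⟨_, hs, rfl⟩

theorem Includes.mapInst {p q : σ.Pos} (h : Includes I p q) : Includes (mapInst f I) p q := by
  rintro a ⟨t, ht, rfl⟩
  obtain ⟨s, hs, rfl⟩ := mem_mapInst.1 ht
  obtain ⟨s', hs', heq⟩ := h _ (occursAt_of_mem hs p.2)
  exact ⟨_, mem_mapInst.2 ⟨s', hs', rfl⟩, congrArg f heq⟩

theorem Determines.mapInst {L : Set (Fin (σ.ar R))} {r : Fin (σ.ar R)} (h : Determines I L r)
    (hf : Set.InjOn f (activeDom I)) : Determines (mapInst f I) L r := by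
  intro t u ht hu heq
  obtain ⟨s, hs, rfl⟩ := mem_mapInst.1 ht
  obtain ⟨s', hs', rfl⟩ := mem_mapInst.1 hu
  exact congrArg f (h s s' hs hs' fun l hl =>
    hf (mem_activeDom hs l) (mem_activeDom hs' l) (heq l hl))

theorem satCQ_of_satCQ_mapInst {q : CQ σ} (hf : Set.InjOn f (activeDom I))
    (h : satCQ (mapInst f I) q) : satCQ I q := by
  obtain ⟨x, hx⟩ := h
  have hpre : ∀ v, ∃ w ∈ activeDom I, f w = x v := by
    intro v
    obtain ⟨A, hA, i, rfl⟩ := q.vars_occur v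
    obtain ⟨s, hs, heq⟩ := mem_mapInst.1 (hx A hA)
    exact ⟨s i, mem_activeDom hs i, (congrFun heq i).symm⟩
  choose w hw hfw using hpre
  refine ⟨w, fun A hA => ?_⟩
  obtain ⟨s, hs, heq⟩ := mem_mapInst.1 (hx A hA)
  have hws : (fun i => w (A.2 i)) = s := funext fun i =>
    hf (hw _) (mem_activeDom hs i) ((hfw _).trans (congrFun heq i))
  rwa [hws]

end MapInst

theorem exists_injOn_extension [Finite α] {e : α → β} (he : Function.Injective e) {φ : α → ℕ}
    (hφ : Function.Injective φ) {A : Set β} (hA : A.Countable) :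
    ∃ m : β → ℕ, (∀ a, m (e a) = φ a) ∧ Set.InjOn m A := by
  obtain ⟨b, hb⟩ := (Set.finite_range φ).bddAbove
  obtain ⟨g, hg⟩ := Set.countable_iff_exists_injOn.1 hA
  have hφb (a : α) : φ a ≤ b := hb ⟨a, rfl⟩
  let m := Function.extend e φ fun w => b + 1 + g w
  have hme (a : α) : m (e a) = φ a := he.extend_apply _ _ a
  have hm {w : β} (hw : ¬ ∃ a, e a = w) : m w = b + 1 + g w := Function.extend_apply' _ _ _ hw
  refine ⟨m, hme, fun w hw w' hw' heq => ?_⟩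
  by_cases hmem : ∃ a, e a = w <;> by_cases hmem' : ∃ a, e a = w'
  · obtain ⟨a, rfl⟩ := hmem
    obtain ⟨a', rfl⟩ := hmem'
    rw [hme, hme] at heq
    rw [hφ heq]
  · obtain ⟨a, rfl⟩ := hmem
    rw [hme, hm hmem'] at heq
    linarith [hφb a]
  · obtain ⟨a', rfl⟩ := hmem'
    rw [hme, hm hmem] at heq
    linarith [hφb a']
  · rw [hm hmem, hm hmem'] at heq
    exact hg hw hw' (Nat.add_left_cancel heq)

theorem UniversalModel.exists_superinstance {D : RankedDeps σ} {I : Inst σ ℕ} {A : Set ℕ} {k : ℕ}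
    (hA : A.Finite) (hI : activeDom I ⊆ A)
    (X : UniversalModel D (comapInst ((↑) : A → ℕ) I) k) :
    ∃ J : Inst σ ℕ, I ⊆ J ∧ J.Finite ∧ (∀ {p q}, D.incl p q → Includes J p q) ∧
      (∀ {R : σ.Rel} {L : Set (Fin (σ.ar R))} {r : Fin (σ.ar R)}, L.Nonempty →
        (∀ d, (∀ l ∈ L, D.det d l) → D.det d r) → Determines I L r → Determines J L r) ∧
      ∀ {M : Inst σ ℕ} {q : CQ σ}, I ⊆ M → (∀ {p q}, D.incl p q → Includes M p q) →
        q.size ≤ k → satCQ J q → satCQ M q := by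
  have := hA.to_subtype
  obtain ⟨m, hm, hinj⟩ := exists_injOn_extension X.embed_injective
    (Subtype.val_injective (p := (· ∈ A))) (activeDom_finite X.finite).countable
  refine ⟨mapInst m X.inst, ?_, X.finite.image _, fun h => (X.includes h).mapInst,
    fun hL hr hdet => ?_, fun hM hincl hq h => ?_⟩
  · rintro ⟨R, t⟩ ht
    let t' (i : Fin (σ.ar R)) : A := ⟨t i, hI (mem_activeDom ht i)⟩
    have ht' : (⟨R, t'⟩ : Fact σ A) ∈ comapInst (↑) I := ht
    exact mem_mapInst.2 ⟨_, X.embed_hom ht', funext fun i => (hm (t' i)).symm⟩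
  · exact (X.determines hL hr (hdet.comapInst Subtype.val_injective)).mapInst hinj
  · exact X.sound ⟨fun R t ht => hM ht, hincl⟩ hq (satCQ_of_satCQ_mapInst hinj h)

section FiniteDeps

variable {Su : Set (UID σ)} {Sf : Set (FD σ)}

theorem includes_of_finiteDeps_incl (hclosed : ∀ τ : UID σ, finImpUID Su Sf τ → τ ∈ Su)
    {M : Inst σ α} (hM : ∀ τ ∈ Su, satUID M τ) {p q : σ.Pos} (h : (finiteDeps Su Sf).incl p q) :
    Includes M p q := by
  by_cases hpq : p = q
  · subst hpq
    exact fun _ ha => ha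
  · exact hM ⟨p, q, hpq⟩ (hclosed _ h)

theorem determines_of_finiteDeps_det (hclosed : ∀ φ : FD σ, finImpFD Su Sf φ → φ ∈ Sf)
    {M : Inst σ α} (hM : ∀ φ ∈ Sf, satFD M φ) {R : σ.Rel} {i j : Fin (σ.ar R)}
    (h : (finiteDeps Su Sf).det i j) : Determines M {i} j := by
  by_cases hij : j = i
  · subst hij
    exact fun t u _ _ heq => heq j rfl
  · exact hM ⟨R, {i}, j, Set.singleton_nonempty i, hij⟩ (hclosed _ h)

theorem finiteDeps_incl_of_mem {τ : UID σ} (hτ : τ ∈ Su) :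
    (finiteDeps Su Sf).incl τ.src τ.dst :=
  fun _ _ hI => hI.1 τ hτ

theorem finiteDeps_det_rhs_of_mem {φ : FD σ} (hφ : φ ∈ Sf) {d : Fin (σ.ar φ.rel)}
    (hd : ∀ l ∈ φ.lhs, (finiteDeps Su Sf).det d l) : (finiteDeps Su Sf).det d φ.rhs :=
  fun I hfin hI t u ht hu heq =>
    hI.2 φ hφ t u ht hu fun l hl => hd l hl I hfin hI t u ht hu heq

end FiniteDeps

/-- **Universal Models Theorem.** If `Σ = Su ∪ Sf` (UIDs and FDs) is closed under
finite implication, `k ∈ ℕ`, and `I₀` is a finite instance satisfying the FDs `Sf`,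
then `I₀` has a finite superinstance that satisfies `Σ` and is `k`-sound for `Σ`,
`I₀`, and the class of all Boolean CQs. -/
theorem universal_models
    {σ : Sig} (Su : Set (UID σ)) (Sf : Set (FD σ))
    (hSu : Su.Finite) (hSf : Sf.Finite)
    (hclU : ∀ τ : UID σ, finImpUID Su Sf τ → τ ∈ Su)
    (hclF : ∀ φ : FD σ, finImpFD Su Sf φ → φ ∈ Sf)
    (k : ℕ) (I₀ : Inst σ ℕ) (hI₀fin : I₀.Finite)
    (hI₀fd : ∀ φ ∈ Sf, satFD I₀ φ) :
    ∃ I : Inst σ ℕ, I₀ ⊆ I ∧ I.Finite ∧ satAllC I Su Sf ∧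
      ∀ q : CQ σ, q.size ≤ k → satCQ I q → unrEntails I₀ Su Sf q := by
  have := (activeDom_finite hI₀fin).to_subtype
  have hX : Nonempty (UniversalModel (finiteDeps Su Sf)
      (comapInst ((↑) : activeDom I₀ → ℕ) I₀) k) :=
    nonempty_universalModel (fun h =>
      (determines_of_finiteDeps_det hclF hI₀fd h).comapInst Subtype.val_injective) k
  obtain ⟨X⟩ := hX
  obtain ⟨I, hI, hfin, hincl, hdet, hsound⟩ :=
    X.exists_superinstance (activeDom_finite hI₀fin) subset_rfl
  refine ⟨I, hI, hfin, ⟨fun τ hτ => ?_, fun φ hφ => ?_⟩, fun q hq hsat M hM hMS => ?_⟩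
  · exact hincl (finiteDeps_incl_of_mem hτ)
  · exact hdet φ.lhs_nonempty (fun d => finiteDeps_det_rhs_of_mem hφ) (hI₀fd φ hφ)
  · exact hsound hM (includes_of_finiteDeps_incl hclU hMS.1) hq hsat

end FQA
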